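/- arXiv:1104.5066 — 11 statements merged into one kernel-verified Lean document; each statement's English description precedes it below -/
import Mathlib

section
/- Let μ ∈ ℂ, let ν be a nonzero real number, and let d ∈ ℂ, and assume 2μ−1+2iν ≠ 0 and 2μ−1−2iν ≠ 0. Then for every integer k, g vanishes at the point t_k(1) := −(d + kπ)/ν, and g also vanishes at the point t_k(2) := t_k(1) − (i/ν)·Log((2μ−1+2iν)/(2μ−1−2iν)), where Log denotes the principal branch of the complex logarithm. (These points are t = log x evaluated at the two sequences of zeros x_k(1), x_k(2) of y₁ accumulating at x = 0.) -/
open Complex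

/-- The leading term `y₁` of the inverse of a Painlevé VI transcendent, written in the
variable `t = log x`, so that `x^{±2iν} = exp(±2iνt)`. -/
noncomputable def g (μ : ℂ) (ν : ℝ) (d : ℂ) (t : ℂ) : ℂ :=
  (2*μ - 1 + 2*I*(ν:ℂ))^2 / (16*(ν:ℂ)^2) * Complex.exp (-(2*I*d)) *
      Complex.exp (-(2*I*(ν:ℂ)*t))
    - ((2*μ - 1)^2 - 4*(ν:ℂ)^2) / (8*(ν:ℂ)^2)
    + (2*μ - 1 - 2*I*(ν:ℂ))^2 / (16*(ν:ℂ)^2) * Complex.exp (2*I*d) *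
        Complex.exp (2*I*(ν:ℂ)*t)

/-- The exponential `w = exp (2i(d + νt))`. With `A = 2μ - 1 + 2iν` and `B = 2μ - 1 - 2iν`, the
function `16ν² w g` is the quadratic `(w - 1)(B² w - A²)`, so the two sequences of zeros of `g`
are solutions of `w = 1` and of `w = (A / B)²`. -/
noncomputable def phase (ν d t : ℂ) : ℂ :=
  exp (2 * I * (d + ν * t))

theorem phase_ne_zero (ν d t : ℂ) : phase ν d t ≠ 0 :=
  exp_ne_zero _

theorem phase_eq_exp_mul_exp (ν d t : ℂ) :
    phase ν d t = exp (2 * I * d) * exp (2 * I * ν * t) := by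
  rw [phase, ← exp_add]
  ring_nf

theorem phase_inv_eq_exp_mul_exp (ν d t : ℂ) :
    (phase ν d t)⁻¹ = exp (-(2 * I * d)) * exp (-(2 * I * ν * t)) := by
  rw [phase_eq_exp_mul_exp, mul_inv, exp_neg, exp_neg]

theorem phase_neg_div_sub {ν : ℂ} (hν : ν ≠ 0) (d L : ℂ) (k : ℤ) :
    phase ν d (-((d + k * Real.pi) / ν) - I / ν * L) = exp L ^ 2 := by
  have exponent_eq : 2 * I * (d + ν * (-((d + k * Real.pi) / ν) - I / ν * L)) =
      2 * L - k * (2 * Real.pi * I) := by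
    field_simp
    linear_combination (-L) * I_sq
  rw [phase, exponent_eq, exp_periodic.sub_int_mul_eq, two_mul, exp_add, sq]

theorem g_eq_phase_sub_one_mul (μ : ℂ) (ν : ℝ) (d t : ℂ) :
    g μ ν d t = (phase ν d t - 1) *
      ((2 * μ - 1 - 2 * I * ν) ^ 2 - (2 * μ - 1 + 2 * I * ν) ^ 2 * (phase ν d t)⁻¹) /
        (16 * (ν : ℂ) ^ 2) := by
  have constant_term : ((2 * μ - 1) ^ 2 - 4 * (ν : ℂ) ^ 2) / (8 * (ν : ℂ) ^ 2) =
      ((2 * μ - 1 + 2 * I * ν) ^ 2 + (2 * μ - 1 - 2 * I * ν) ^ 2) / (16 * (ν : ℂ) ^ 2) := by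
    linear_combination (-8 * (ν : ℂ) ^ 2 / (16 * (ν : ℂ) ^ 2)) * I_sq
  rw [g, constant_term, mul_assoc, mul_assoc (_ / _) (exp (2 * I * d)),
    ← phase_inv_eq_exp_mul_exp, ← phase_eq_exp_mul_exp]
  linear_combination ((2 * μ - 1 + 2 * I * ν) ^ 2 / (16 * (ν : ℂ) ^ 2)) *
    mul_inv_cancel₀ (phase_ne_zero ν d t)

theorem g_eq_zero_iff {μ : ℂ} {ν : ℝ} (hν : ν ≠ 0) {d t : ℂ} :
    g μ ν d t = 0 ↔ phase ν d t = 1 ∨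
      (2 * μ - 1 - 2 * I * ν) ^ 2 * phase ν d t = (2 * μ - 1 + 2 * I * ν) ^ 2 := by
  have denominator_ne_zero : 16 * (ν : ℂ) ^ 2 ≠ 0 := by simpa using hν
  rw [g_eq_phase_sub_one_mul, div_eq_zero_iff, or_iff_left denominator_ne_zero, mul_eq_zero,
    sub_eq_zero, sub_eq_zero, eq_mul_inv_iff_mul_eq₀ (phase_ne_zero ν d t)]

/-- `g` vanishes at `t_k(1) = −(d + kπ)/ν` and at
`t_k(2) = t_k(1) − (i/ν)·Log((2μ−1+2iν)/(2μ−1−2iν))` for every integer `k`. -/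
theorem stmt_1 (μ : ℂ) (ν : ℝ) (hν : ν ≠ 0) (d : ℂ)
    (h1 : 2*μ - 1 + 2*I*(ν:ℂ) ≠ 0) (h2 : 2*μ - 1 - 2*I*(ν:ℂ) ≠ 0) :
    ∀ k : ℤ,
      g μ ν d (-((d + (k:ℂ)*(Real.pi:ℂ)) / (ν:ℂ))) = 0 ∧
      g μ ν d (-((d + (k:ℂ)*(Real.pi:ℂ)) / (ν:ℂ))
        - (I/(ν:ℂ)) * Complex.log ((2*μ - 1 + 2*I*(ν:ℂ)) / (2*μ - 1 - 2*I*(ν:ℂ)))) = 0 := by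
  intro k
  have hν' : (ν : ℂ) ≠ 0 := ofReal_ne_zero.mpr hν
  refine ⟨(g_eq_zero_iff hν).mpr (.inl ?_), (g_eq_zero_iff hν).mpr (.inr ?_)⟩
  · simpa using phase_neg_div_sub hν' d 0 k
  · rw [phase_neg_div_sub hν', exp_log (div_ne_zero h1 h2), div_pow,
      mul_div_cancel₀ _ (pow_ne_zero 2 h2)]
end

section
/- Let G := (1+√5)/2 be the golden ratio, set ν := (2/π)·ln G (a real number), and define the complex number Z := −π²·((G⁴+1)²/(G²+1)²)·2^{16iν}·ν²·((1−2iν)²/(1+2iν)²)·Γ(1−2iν)⁴/Γ(1−iν)⁸, where Γ is the complex Gamma function and 2^{16iν} = exp(16iν·ln 2). Then ‖Z‖ = G². Consequently the integration constant d = (i/2)·log Z of the Painlevé VI branch associated to the quantum cohomology of CP² satisfies Im d = πν/2 (for any branch of the logarithm, since Im((i/2)·log Z) = (1/2)·ln‖Z‖). -/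
open Complex

/-!
By the reflection formula, `‖Γ(1 - iy)‖² = πy / sinh πy`. Applied at `y = ν` and `y = 2ν`, together
with `sinh 2t = 2 sinh t cosh t`, it collapses the Gamma factors of `Z`, so that
`‖Z‖ = ((G⁴ + 1) / (G² + 1) · tanh πν)²`, the remaining factors having modulus one. For
`ν = (2/π) ln G` one has `πν = ln G²`, hence `tanh πν = (G⁴ - 1) / (G⁴ + 1)` and
`‖Z‖ = (G² - 1)²`. The golden ratio enters only through `G² - 1 = G`.
-/

theorem Gamma_one_add_mul_Gamma_one_sub {z : ℂ} (hz : z ≠ 0) :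
    Gamma (1 + z) * Gamma (1 - z) = Real.pi * z / sin (Real.pi * z) := by
  rw [add_comm 1 z, Gamma_add_one z hz, mul_assoc, Gamma_mul_Gamma_one_sub]
  ring

theorem conj_one_sub_I_mul_ofReal (y : ℝ) : (starRingEnd ℂ) (1 - I * y) = 1 + I * y := by
  simp

theorem norm_Gamma_one_sub_I_mul_ofReal_sq {y : ℝ} (hy : y ≠ 0) :
    ‖Gamma (1 - I * y)‖ ^ 2 = Real.pi * y / Real.sinh (Real.pi * y) := by
  have hIy : I * (y : ℂ) ≠ 0 := mul_ne_zero I_ne_zero (ofReal_ne_zero.mpr hy)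
  have hsin : sin (Real.pi * (I * y)) = I * sinh (Real.pi * y) := by
    rw [mul_left_comm, mul_comm I, sin_mul_I, mul_comm]
  have hcomplex : (‖Gamma (1 - I * y)‖ : ℂ) ^ 2 = Real.pi * y / sinh (Real.pi * y) := by
    rw [← conj_mul', ← Gamma_conj, conj_one_sub_I_mul_ofReal,
      Gamma_one_add_mul_Gamma_one_sub hIy, hsin, mul_left_comm,
      mul_div_mul_left _ _ I_ne_zero]
  exact_mod_cast hcomplex

theorem sq_mul_norm_Gamma_ratio_eq_tanh_sq (ν : ℝ) :
    (Real.pi * ν) ^ 2 * (‖Gamma (1 - 2 * I * ν)‖ ^ 4 / ‖Gamma (1 - I * ν)‖ ^ 8) =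
      Real.tanh (Real.pi * ν) ^ 2 := by
  rcases eq_or_ne ν 0 with rfl | hν
  · simp
  have hsinh : Real.sinh (Real.pi * ν) ≠ 0 :=
    Real.sinh_ne_zero.mpr (mul_ne_zero Real.pi_ne_zero hν)
  have hnum : ‖Gamma (1 - 2 * I * ν)‖ ^ 2 =
      Real.pi * ν / (Real.sinh (Real.pi * ν) * Real.cosh (Real.pi * ν)) := by
    have harg : 1 - 2 * I * (ν : ℂ) = 1 - I * ((2 * ν : ℝ) : ℂ) := by push_cast; ring
    rw [harg, norm_Gamma_one_sub_I_mul_ofReal_sq (mul_ne_zero two_ne_zero hν), mul_left_comm,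
      Real.sinh_two_mul, mul_assoc 2, mul_div_mul_left _ _ two_ne_zero]
  have hden := norm_Gamma_one_sub_I_mul_ofReal_sq hν
  rw [pow_mul _ 2 2, pow_mul _ 2 4, hnum, hden, Real.tanh_eq_sinh_div_cosh]
  field_simp

theorem norm_one_sub_div_one_add_I_mul_ofReal (y : ℝ) :
    ‖(1 - I * (y : ℂ)) / (1 + I * y)‖ = 1 := by
  have hne : 1 - I * (y : ℂ) ≠ 0 := fun h ↦ by simpa using congrArg re h
  rw [norm_div, ← conj_one_sub_I_mul_ofReal, norm_conj, div_self (norm_ne_zero_iff.mpr hne)]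

/-- The number `Z` for which `d = (i/2) log Z` is an integration constant of the Painlevé VI branch,
with `G` and `ν` left as independent real parameters. -/
noncomputable def branchConstant (G ν : ℝ) : ℂ :=
  -(Real.pi : ℂ) ^ 2 * (((G : ℂ) ^ 4 + 1) ^ 2 / ((G : ℂ) ^ 2 + 1) ^ 2) *
    exp (16 * I * ν * Real.log 2) * (ν : ℂ) ^ 2 *
    ((1 - 2 * I * ν) ^ 2 / (1 + 2 * I * ν) ^ 2) *
    Gamma (1 - 2 * I * ν) ^ 4 / Gamma (1 - I * ν) ^ 8

theorem norm_branchConstant (G ν : ℝ) :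
    ‖branchConstant G ν‖ = ((G ^ 4 + 1) / (G ^ 2 + 1) * Real.tanh (Real.pi * ν)) ^ 2 := by
  have hfactor : branchConstant G ν =
      -((((G ^ 4 + 1) / (G ^ 2 + 1) : ℝ) : ℂ) ^ 2 * exp ((16 * ν * Real.log 2 : ℝ) * I) *
        ((1 - I * (2 * ν : ℝ)) / (1 + I * (2 * ν : ℝ))) ^ 2 *
        (((Real.pi * ν : ℝ) : ℂ) ^ 2 * (Gamma (1 - 2 * I * ν) ^ 4 / Gamma (1 - I * ν) ^ 8))) := by
    have hexp : 16 * I * (ν : ℂ) * (Real.log 2 : ℂ) = (16 * ν * Real.log 2 : ℝ) * I := by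
      push_cast; ring
    rw [branchConstant, hexp, div_pow]
    push_cast
    rw [div_pow]
    ring
  have hGamma : ‖((Real.pi * ν : ℝ) : ℂ) ^ 2 *
      (Gamma (1 - 2 * I * ν) ^ 4 / Gamma (1 - I * ν) ^ 8)‖ = Real.tanh (Real.pi * ν) ^ 2 := by
    rw [norm_mul, norm_div, norm_pow, norm_pow, norm_pow, norm_real, Real.norm_eq_abs, sq_abs,
      sq_mul_norm_Gamma_ratio_eq_tanh_sq]
  rw [hfactor, norm_neg, norm_mul, hGamma, norm_mul, norm_mul, norm_pow, norm_pow,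
    norm_exp_ofReal_mul_I, norm_one_sub_div_one_add_I_mul_ofReal, norm_real, Real.norm_eq_abs,
    sq_abs]
  ring

theorem tanh_log {x : ℝ} (hx : 0 < x) : Real.tanh (Real.log x) = (x ^ 2 - 1) / (x ^ 2 + 1) := by
  rw [Real.tanh_eq_sinh_div_cosh, Real.sinh_log hx, Real.cosh_log hx]
  field_simp

theorem im_I_div_two_mul_eq_log_norm_exp (w : ℂ) : (I / 2 * w).im = Real.log ‖exp w‖ / 2 := by
  rw [norm_exp, Real.log_exp, div_mul_eq_mul_div, div_ofNat_im, I_mul_im]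

theorem stmt_4_general {G ν : ℝ} (hG : 0 < G) (hν : ν = (2 / Real.pi) * Real.log G) :
    ‖branchConstant G ν‖ = (G ^ 2 - 1) ^ 2 ∧
      ∀ w : ℂ, exp w = branchConstant G ν → (I / 2 * w).im = Real.log |G ^ 2 - 1| := by
  have hlog : Real.pi * ν = Real.log (G ^ 2) := by
    rw [hν, Real.log_pow]
    push_cast
    field_simp
  have hnorm : ‖branchConstant G ν‖ = (G ^ 2 - 1) ^ 2 := by
    rw [norm_branchConstant, hlog, tanh_log (pow_pos hG 2)]
    field_simp
    ring
  refine ⟨hnorm, fun w hw ↦ ?_⟩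
  rw [im_I_div_two_mul_eq_log_norm_exp, hw, hnorm, Real.log_pow, Real.log_abs]
  ring

/-- with `G` the golden ratio, `ν = (2/π)·ln G`, and
`Z = −π²·((G⁴+1)²/(G²+1)²)·2^{16iν}·ν²·((1−2iν)²/(1+2iν)²)·Γ(1−2iν)⁴/Γ(1−iν)⁸`,
one has `‖Z‖ = G²`; consequently `d = (i/2)·log Z` satisfies `Im d = πν/2`. -/
theorem stmt_4 (G : ℝ) (hG : G = (1 + Real.sqrt 5)/2)
    (ν : ℝ) (hν : ν = (2/Real.pi) * Real.log G)
    (Z : ℂ)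
    (hZ : Z = -(Real.pi:ℂ)^2 * (((G:ℂ)^4 + 1)^2 / ((G:ℂ)^2 + 1)^2) *
        Complex.exp (16*I*(ν:ℂ)*(Real.log 2 : ℂ)) * (ν:ℂ)^2 *
        ((1 - 2*I*(ν:ℂ))^2 / (1 + 2*I*(ν:ℂ))^2) *
        Complex.Gamma (1 - 2*I*(ν:ℂ))^4 / Complex.Gamma (1 - I*(ν:ℂ))^8) :
    ‖Z‖ = G^2 ∧ ((I/2) * Complex.log Z).im = Real.pi * ν / 2 := by
  obtain rfl : G = Real.goldenRatio := hG
  obtain rfl : Z = branchConstant Real.goldenRatio ν := hZ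
  have hgolden : Real.goldenRatio ^ 2 - 1 = Real.goldenRatio := by
    rw [Real.goldenRatio_sq, add_sub_cancel_right]
  obtain ⟨hnorm, him⟩ := stmt_4_general Real.goldenRatio_pos hν
  rw [hgolden] at hnorm him
  have hne : branchConstant Real.goldenRatio ν ≠ 0 :=
    norm_pos_iff.mp (hnorm ▸ pow_pos Real.goldenRatio_pos 2)
  refine ⟨hnorm, ?_⟩
  rw [him _ (exp_log hne), Real.log_abs, hν]
  field_simp
end

section
/- For every real number ν, set p := −2·cosh(2πν) and c := −(1/2)·e^{−3πν}·(3e^{5πν} + 4e^{3πν} + 3e^{πν} − e^{6πν} − 3e^{4πν} − 3e^{2πν} − 1). Then 3p² + p³ − 12p(1 + c) + 4c² + 16c + 8 = 0. (Thus the pair (cos(2πμ), p₀ₓ) = (c, p) lies on the cubic curve obtained from the affine cubic surface of Painlevé VI monodromy data by imposing p₀ₓ = p₀₁ = p_{x1} = p; this is the branch of the curve through the point (−1, −2), which contains the quantum cohomology point (1, −7).) -/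
/-!
Completing the square in `c` turns the curve into the cuspidal cubic `(2c + 4 - 3p)² = (2 - p)³`,
which is parametrized by `2 - p = t²`, `2c + 4 - 3p = t³`. The given pair is the point with
parameter `t = 2 cosh (πν)`.
-/

theorem monodromy_cubic_eq_zero_iff_sq_eq_cube {R : Type*} [CommRing R] (p c : R) :
    3 * p ^ 2 + p ^ 3 - 12 * p * (1 + c) + 4 * c ^ 2 + 16 * c + 8 = 0 ↔
      (2 * c + 4 - 3 * p) ^ 2 = (2 - p) ^ 3 := by
  constructor <;> intro h <;> linear_combination h

section

open Complex

theorem two_add_two_mul_cosh_two_mul (z : ℂ) :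
    2 + 2 * cosh (2 * z) = (2 * cosh z) ^ 2 := by
  rw [cosh_two_mul, sinh_sq]
  ring

theorem two_mul_cosh_three_mul_add_six_mul_cosh (z : ℂ) :
    2 * cosh (3 * z) + 6 * cosh z = (2 * cosh z) ^ 3 := by
  rw [cosh_three_mul]
  ring

theorem exp_neg_three_mul_mul_eq_cosh (z : ℂ) :
    exp (-(3 * z)) * (3 * exp (5 * z) + 4 * exp (3 * z) + 3 * exp z
        - exp (6 * z) - 3 * exp (4 * z) - 3 * exp (2 * z) - 1) =
      6 * cosh (2 * z) + 4 - 2 * cosh (3 * z) - 6 * cosh z := by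
  simp only [cosh, mul_add, mul_sub, mul_one, mul_left_comm (exp _), ← exp_add, neg_add_cancel,
    exp_zero]
  ring_nf

theorem stmt_5_general (ν p c : ℂ)
    (hp : p = -2 * cosh (2 * Real.pi * ν))
    (hc : c = -(1 / 2) * exp (-(3 * Real.pi * ν)) *
      (3 * exp (5 * Real.pi * ν) + 4 * exp (3 * Real.pi * ν) + 3 * exp (Real.pi * ν)
        - exp (6 * Real.pi * ν) - 3 * exp (4 * Real.pi * ν) - 3 * exp (2 * Real.pi * ν) - 1)) :
    3 * p ^ 2 + p ^ 3 - 12 * p * (1 + c) + 4 * c ^ 2 + 16 * c + 8 = 0 := by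
  simp only [mul_assoc _ (Real.pi : ℂ) ν] at hp hc
  set z : ℂ := Real.pi * ν
  have two_sub_eq_sq : 2 - p = (2 * cosh z) ^ 2 := by
    linear_combination two_add_two_mul_cosh_two_mul z - hp
  have add_four_sub_eq_cube : 2 * c + 4 - 3 * p = (2 * cosh z) ^ 3 := by
    linear_combination two_mul_cosh_three_mul_add_six_mul_cosh z
      - exp_neg_three_mul_mul_eq_cosh z + 2 * hc - 3 * hp
  rw [monodromy_cubic_eq_zero_iff_sq_eq_cube, add_four_sub_eq_cube, two_sub_eq_sq,
    pow_right_comm]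

end

/-- the pair `(c, p)` with `p = −2cosh(2πν)` and
`c = −(1/2)e^{−3πν}(3e^{5πν} + 4e^{3πν} + 3e^{πν} − e^{6πν} − 3e^{4πν} − 3e^{2πν} − 1)`
lies on the cubic curve `3p² + p³ − 12p(1+c) + 4c² + 16c + 8 = 0`. -/
theorem stmt_5 (ν p c : ℝ)
    (hp : p = -2 * Real.cosh (2*Real.pi*ν))
    (hc : c = -(1/2) * Real.exp (-(3*Real.pi*ν)) *
      (3*Real.exp (5*Real.pi*ν) + 4*Real.exp (3*Real.pi*ν) + 3*Real.exp (Real.pi*ν)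
        - Real.exp (6*Real.pi*ν) - 3*Real.exp (4*Real.pi*ν) - 3*Real.exp (2*Real.pi*ν) - 1)) :
    3*p^2 + p^3 - 12*p*(1 + c) + 4*c^2 + 16*c + 8 = 0 := by
  exact_mod_cast stmt_5_general ν p c (by exact_mod_cast hp) (by rw [hc]; push_cast; rfl)
end

section
/- For every real number ν, set p := −2·cosh(2πν) and c := −(1/2)·e^{−3πν}·(3e^{5πν} + 4e^{3πν} + 3e^{πν} + e^{6πν} + 3e^{4πν} + 3e^{2πν} + 1). Then 3p² + p³ − 12p(1 + c) + 4c² + 16c + 8 = 0. (Thus (cos(2πμ), p₀ₓ) = (c, p) lies on the branch of the cubic curve through the point (−9, −2).) -/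
/-!
Completing the square in `c` puts the cubic in the form `(2c - 3p + 4)² = (2 - p)³`, so it is
rational with a cusp at `(c, p) = (1, 2)` and is parametrized by `p = 2 - t²`,
`2c = 2 - 3t² - t³`. The pair of the theorem is the point with `t = 2 cosh(πν)`.
-/

theorem cubic_eq_sq_sub_cube {R : Type*} [CommRing R] (p c : R) :
    3 * p ^ 2 + p ^ 3 - 12 * p * (1 + c) + 4 * c ^ 2 + 16 * c + 8 =
      (2 * c - 3 * p + 4) ^ 2 - (2 - p) ^ 3 := by
  ring

theorem cubic_eq_zero_of_cusp_param {R : Type*} [CommRing R] {p c t : R}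
    (hp : p = 2 - t ^ 2) (hc : 2 * c = 2 - 3 * t ^ 2 - t ^ 3) :
    3 * p ^ 2 + p ^ 3 - 12 * p * (1 + c) + 4 * c ^ 2 + 16 * c + 8 = 0 := by
  have square_side : 2 * c - 3 * p + 4 = -t ^ 3 := by rw [hc, hp]; ring
  have cube_side : 2 - p = t ^ 2 := by rw [hp]; ring
  rw [cubic_eq_sq_sub_cube, square_side, cube_side]
  ring

theorem palindromic_sextic_eq {K : Type*} [Field K] {x : K} (hx : x ≠ 0) :
    3 * x ^ 5 + 4 * x ^ 3 + 3 * x + x ^ 6 + 3 * x ^ 4 + 3 * x ^ 2 + 1 =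
      x ^ 3 * ((x + x⁻¹) ^ 3 + 3 * (x + x⁻¹) ^ 2 - 2) := by
  field_simp
  ring

theorem exp_ofNat_mul (n : ℕ) [n.AtLeastTwo] (z : ℂ) :
    Complex.exp (ofNat(n) * z) = Complex.exp z ^ (OfNat.ofNat n : ℕ) :=
  Complex.exp_nat_mul z n

theorem exp_neg_mul_palindromic_sextic (z : ℂ) :
    Complex.exp (-(3 * z)) *
      (3 * Complex.exp (5 * z) + 4 * Complex.exp (3 * z) + 3 * Complex.exp z
        + Complex.exp (6 * z) + 3 * Complex.exp (4 * z) + 3 * Complex.exp (2 * z) + 1) =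
      (2 * Complex.cosh z) ^ 3 + 3 * (2 * Complex.cosh z) ^ 2 - 2 := by
  have two_cosh : 2 * Complex.cosh z = Complex.exp z + (Complex.exp z)⁻¹ := by
    rw [Complex.two_cosh, Complex.exp_neg]
  have hexp : Complex.exp z ≠ 0 := Complex.exp_ne_zero z
  simp only [Complex.exp_neg, exp_ofNat_mul]
  rw [palindromic_sextic_eq hexp, two_cosh, inv_mul_cancel_left₀ (pow_ne_zero 3 hexp)]

theorem neg_two_mul_cosh_two_mul (z : ℂ) :
    -2 * Complex.cosh (2 * z) = 2 - (2 * Complex.cosh z) ^ 2 := by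
  rw [Complex.cosh_two_mul, Complex.sinh_sq]
  ring

theorem stmt_6_general (ν p c : ℂ)
    (hp : p = -2 * Complex.cosh (2 * Real.pi * ν))
    (hc : c = -(1 / 2) * Complex.exp (-(3 * Real.pi * ν)) *
      (3 * Complex.exp (5 * Real.pi * ν) + 4 * Complex.exp (3 * Real.pi * ν)
        + 3 * Complex.exp (Real.pi * ν) + Complex.exp (6 * Real.pi * ν)
        + 3 * Complex.exp (4 * Real.pi * ν) + 3 * Complex.exp (2 * Real.pi * ν) + 1)) :
    3 * p ^ 2 + p ^ 3 - 12 * p * (1 + c) + 4 * c ^ 2 + 16 * c + 8 = 0 := by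
  simp only [mul_assoc _ (Real.pi : ℂ) ν] at hp hc
  rw [neg_two_mul_cosh_two_mul] at hp
  rw [mul_assoc, exp_neg_mul_palindromic_sextic] at hc
  refine cubic_eq_zero_of_cusp_param hp ?_
  rw [hc]
  ring

/-- the pair `(c, p)` with `p = −2cosh(2πν)` and
`c = −(1/2)e^{−3πν}(3e^{5πν} + 4e^{3πν} + 3e^{πν} + e^{6πν} + 3e^{4πν} + 3e^{2πν} + 1)`
lies on the cubic curve `3p² + p³ − 12p(1+c) + 4c² + 16c + 8 = 0`. -/
theorem stmt_6 (ν p c : ℝ)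
    (hp : p = -2 * Real.cosh (2*Real.pi*ν))
    (hc : c = -(1/2) * Real.exp (-(3*Real.pi*ν)) *
      (3*Real.exp (5*Real.pi*ν) + 4*Real.exp (3*Real.pi*ν) + 3*Real.exp (Real.pi*ν)
        + Real.exp (6*Real.pi*ν) + 3*Real.exp (4*Real.pi*ν) + 3*Real.exp (2*Real.pi*ν) + 1)) :
    3*p^2 + p^3 - 12*p*(1 + c) + 4*c^2 + 16*c + 8 = 0 := by
  exact_mod_cast stmt_6_general ν p c (by rw [hp]; push_cast; rfl) (by rw [hc]; push_cast; rfl)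
end

section
/- Let G := (1+√5)/2 be the golden ratio. For every real number ν, c₂(ν) ≥ 0 if and only if |ν| ≤ (2/π)·ln G, equivalently if and only if cosh(πν) ≤ 3/2. -/
/-- `c₂(ν) = 96cosh(πν) + 52cosh(3πν) + 12cosh(5πν) − 50 − 78cosh(2πν) − 30cosh(4πν) − 2cosh(6πν)`. -/
noncomputable def c₂ (ν : ℝ) : ℝ :=
  96*Real.cosh (Real.pi*ν) + 52*Real.cosh (3*Real.pi*ν) + 12*Real.cosh (5*Real.pi*ν)
    - 50 - 78*Real.cosh (2*Real.pi*ν) - 30*Real.cosh (4*Real.pi*ν) - 2*Real.cosh (6*Real.pi*ν)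

/-!
Since `cosh (n * x) = Tₙ (cosh x)` for the Chebyshev polynomials `Tₙ`, `c₂ ν` is a sextic polynomial
in `t = cosh (π * ν)`. It factors as `16 t² (t - 1)² (2 t + 1) (3 - 2 t)`, so for `t ≥ 1` its sign
is decided by `3 - 2 t`, up to the double zero at `t = 1`. The golden ratio enters because
`φ - φ⁻¹ = 1` says `sinh (log φ) = 1 / 2`, whence `cosh (2 * log φ) = 1 + 2 * (1 / 2) ^ 2 = 3 / 2`.
-/

section Factorization

open Polynomial Polynomial.Chebyshev

/-- The polynomial expressing `c₂ ν` in terms of `cosh (π * ν)`: each `cosh (n * π * ν)` in `c₂` is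
replaced by the Chebyshev polynomial `T R n`. -/
noncomputable def c₂Poly (R : Type*) [CommRing R] : R[X] :=
  96 * T R 1 + 52 * T R 3 + 12 * T R 5 - 50 - 78 * T R 2 - 30 * T R 4 - 2 * T R 6

theorem c₂_eq_eval_c₂Poly (ν : ℝ) : c₂ ν = (c₂Poly ℝ).eval (Real.cosh (Real.pi * ν)) := by
  simp [c₂, c₂Poly, T_real_cosh, mul_assoc]

theorem c₂Poly_eq_mul (R : Type*) [CommRing R] :
    c₂Poly R = 16 * X ^ 2 * (X - 1) ^ 2 * (2 * X + 1) * (3 - 2 * X) := by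
  have T_three : T R 3 = 2 * X * T R 2 - T R 1 := T_add_two R 1
  have T_four : T R 4 = 2 * X * T R 3 - T R 2 := T_add_two R 2
  have T_five : T R 5 = 2 * X * T R 4 - T R 3 := T_add_two R 3
  have T_six : T R 6 = 2 * X * T R 5 - T R 4 := T_add_two R 4
  rw [c₂Poly, T_six, T_five, T_four, T_three, T_two, T_one]
  ring

theorem eval_c₂Poly {R : Type*} [CommRing R] (t : R) :
    (c₂Poly R).eval t = 16 * t ^ 2 * (t - 1) ^ 2 * (2 * t + 1) * (3 - 2 * t) := by
  simp [c₂Poly_eq_mul]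

theorem eval_c₂Poly_nonneg_iff {K : Type*} [Field K] [LinearOrder K] [IsStrictOrderedRing K]
    {t : K} (ht : 0 ≤ 2 * t + 1) : 0 ≤ (c₂Poly K).eval t ↔ t ≤ 3 / 2 := by
  rw [eval_c₂Poly]
  constructor
  · contrapose!
    intro h
    have : 0 < t := by linarith
    have : 0 < t - 1 := by linarith
    exact mul_neg_of_pos_of_neg (by positivity) (by linarith)
  · intro h
    have : 0 ≤ 3 - 2 * t := by linarith
    positivity

end Factorization

theorem c₂_nonneg_iff_cosh_le (ν : ℝ) : 0 ≤ c₂ ν ↔ Real.cosh (Real.pi * ν) ≤ 3 / 2 := by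
  rw [c₂_eq_eval_c₂Poly]
  exact eval_c₂Poly_nonneg_iff (by linarith [Real.cosh_pos (Real.pi * ν)])

section GoldenRatio

open scoped goldenRatio

theorem sinh_log_goldenRatio : Real.sinh (Real.log φ) = 1 / 2 := by
  rw [Real.sinh_log Real.goldenRatio_pos, Real.inv_goldenRatio, sub_neg_eq_add,
    Real.goldenRatio_add_goldenConj]

theorem cosh_two_mul_log_goldenRatio : Real.cosh (2 * Real.log φ) = 3 / 2 := by
  rw [Real.cosh_two_mul, Real.cosh_sq, sinh_log_goldenRatio]
  norm_num

theorem cosh_le_three_halves_iff_abs_le {x : ℝ} : Real.cosh x ≤ 3 / 2 ↔ |x| ≤ 2 * Real.log φ := by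
  have two_mul_log_pos : 0 < 2 * Real.log φ := by
    linarith [Real.log_pos Real.one_lt_goldenRatio]
  rw [← cosh_two_mul_log_goldenRatio, Real.cosh_le_cosh, abs_of_pos two_mul_log_pos]

end GoldenRatio

/-- with `G` the golden ratio, for every real `ν` one has `c₂(ν) ≥ 0`
iff `|ν| ≤ (2/π)·ln G`, equivalently iff `cosh(πν) ≤ 3/2`. -/
theorem stmt_8 (G : ℝ) (hG : G = (1 + Real.sqrt 5)/2) (ν : ℝ) :
    (0 ≤ c₂ ν ↔ |ν| ≤ (2/Real.pi) * Real.log G) ∧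
    (0 ≤ c₂ ν ↔ Real.cosh (Real.pi*ν) ≤ 3/2) := by
  refine ⟨?_, c₂_nonneg_iff_cosh_le ν⟩
  obtain rfl : G = Real.goldenRatio := hG
  calc 0 ≤ c₂ ν
    _ ↔ Real.cosh (Real.pi * ν) ≤ 3 / 2 := c₂_nonneg_iff_cosh_le ν
    _ ↔ |Real.pi * ν| ≤ 2 * Real.log Real.goldenRatio := cosh_le_three_halves_iff_abs_le
    _ ↔ |ν| ≤ 2 / Real.pi * Real.log Real.goldenRatio := by
      rw [abs_mul, abs_of_pos Real.pi_pos, div_mul_eq_mul_div, le_div_iff₀' Real.pi_pos]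
end

section
/- As ν → 0⁺ (ν real, positive), the quantity arg( c₁(ν) − (i/2)·√(c₂(ν)) ) / ν² tends to −√3·π², where arg is the principal argument. (Equivalently, the exponent μ = −1/2 + (1/2π)·arg(c₁(ν) − (i/2)√(c₂(ν))) of the real-μ solutions with p₀ₓ = p₀₁ = p_{x1} = −2cosh(2πν) satisfies μ = −1/2 − (π√3/2)·ν² + o(ν²), which is the leading term of the Taylor expansion of μ in ν.) -/
/-- `c₁(ν) = 2 + 3cosh(2πν) − cosh(3πν) − 3cosh(πν)`. -/
noncomputable def c₁ (ν : ℝ) : ℝ :=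
  2 + 3*Real.cosh (2*Real.pi*ν) - Real.cosh (3*Real.pi*ν) - 3*Real.cosh (Real.pi*ν)

/-!
The complex number `c₁ - (i/2) √c₂` lies on the unit circle. In terms of `C = cosh (πν)` one has
`c₁ = 1 - 2σ²` and `c₂ = 16σ²(1 - σ²)` with `σ = (C - 1) √(2C + 1)`, so the number is `exp (-iθ)`
with `sin (θ / 2) = σ`, and its argument is exactly `-2 arcsin σ` as long as `C < 3/2`. As `ν → 0`,
`C - 1 ~ (πν)² / 2` and `√(2C + 1) → √3`, which gives `-2 arcsin σ ~ -√3 π² ν²`.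
-/

open Real Filter Topology Asymptotics

section HyperbolicCosine

variable (x : ℝ)

theorem cosh_two_mul_eq : cosh (2 * x) = 2 * cosh x ^ 2 - 1 := by
  rw [cosh_two_mul, sinh_sq]
  ring

theorem cosh_four_mul : cosh (4 * x) = 8 * cosh x ^ 4 - 8 * cosh x ^ 2 + 1 := by
  rw [show 4 * x = 2 * (2 * x) by ring, cosh_two_mul_eq, cosh_two_mul_eq]
  ring

theorem cosh_five_mul : cosh (5 * x) = 16 * cosh x ^ 5 - 20 * cosh x ^ 3 + 5 * cosh x := by
  have h_sum_to_product :
      cosh (3 * x + 2 * x) + cosh (3 * x - 2 * x) = 2 * cosh (3 * x) * cosh (2 * x) := by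
    rw [cosh_add, cosh_sub]
    ring
  rw [show 3 * x + 2 * x = 5 * x by ring, show 3 * x - 2 * x = x by ring, cosh_three_mul,
    cosh_two_mul_eq] at h_sum_to_product
  linear_combination h_sum_to_product

theorem cosh_six_mul :
    cosh (6 * x) = 32 * cosh x ^ 6 - 48 * cosh x ^ 4 + 18 * cosh x ^ 2 - 1 := by
  rw [show 6 * x = 2 * (3 * x) by ring, cosh_two_mul_eq, cosh_three_mul]
  ring

theorem cosh_sub_one_eq_two_mul_sinh_half_sq : cosh x - 1 = 2 * sinh (x / 2) ^ 2 := by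
  have h_double := cosh_two_mul_eq (x / 2)
  rw [mul_div_cancel₀ x two_ne_zero] at h_double
  rw [h_double, sinh_sq]
  ring

end HyperbolicCosine

section Asymptotics

theorem isEquivalent_arcsin : arcsin ~[𝓝 0] id := by
  simpa using! (hasDerivAt_arcsin (x := 0) (by norm_num) (by norm_num)).isLittleO

theorem isEquivalent_cosh_sub_one : (fun x => cosh x - 1) ~[𝓝 0] fun x => x ^ 2 / 2 := by
  have h_half : Tendsto (fun x : ℝ => x / 2) (𝓝 0) (𝓝 0) :=
    Continuous.tendsto' (by fun_prop) 0 0 (zero_div 2)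
  have h_sinh_half := isEquivalent_sinh.comp_tendsto h_half
  refine ((IsEquivalent.refl (u := fun _ => (2 : ℝ))).mul (h_sinh_half.pow 2)).congr_left ?_
    |>.congr_right ?_
  · exact .of_forall fun x => (cosh_sub_one_eq_two_mul_sinh_half_sq x).symm
  · exact .of_forall fun x => by
      simp only [Pi.mul_apply, Pi.pow_apply, Function.comp_apply, id]
      ring

theorem tendsto_div_of_isEquivalent_const_mul {α 𝕜 : Type*} [NormedField 𝕜] {l : Filter α}
    {u v : α → 𝕜} {c : 𝕜} (huv : u ~[l] fun x => c * v x) (hv : ∀ᶠ x in l, v x ≠ 0) :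
    Tendsto (fun x => u x / v x) l (𝓝 c) := by
  have h_quotient : (fun x => u x / v x) ~[l] fun x => c * v x / v x := huv.div .refl
  refine (h_quotient.congr_right ?_).tendsto_const
  filter_upwards [hv] with x hx using mul_div_cancel_right₀ c hx

end Asymptotics

theorem arg_one_sub_two_mul_sq_sub_I_mul {s : ℝ} (hs : -1 ≤ s) (hs' : s < 1) :
    Complex.arg ((1 - 2 * s ^ 2 : ℝ) - Complex.I * (2 * s * √(1 - s ^ 2) : ℝ)) =
      -2 * arcsin s := by
  have h_sin : sin (arcsin s) = s := sin_arcsin hs hs'.le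
  have h_cos_two : cos (-2 * arcsin s) = 1 - 2 * s ^ 2 := by
    rw [neg_mul, cos_neg, cos_two_mul_eq_one_sub, h_sin]
  have h_sin_two : sin (-2 * arcsin s) = -(2 * s * √(1 - s ^ 2)) := by
    rw [neg_mul, sin_neg, sin_two_mul, h_sin, cos_arcsin]
  have h_mem : -2 * arcsin s ∈ Set.Ioc (-π) π := by
    constructor <;> linarith [arcsin_lt_pi_div_two.2 hs', neg_pi_div_two_le_arcsin s]
  rw [← Complex.arg_cos_add_sin_mul_I h_mem, ← Complex.ofReal_cos, ← Complex.ofReal_sin,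
    h_cos_two, h_sin_two]
  push_cast
  ring_nf

/-- The number `σ(ν) = (C - 1) √(2C + 1)`, `C = cosh (πν)`. It is the sine of half the angle `θ`
with `c₁ = cos θ` and `√c₂ / 2 = sin θ`. -/
noncomputable def sinHalfAngle (ν : ℝ) : ℝ :=
  (cosh (π * ν) - 1) * √(2 * cosh (π * ν) + 1)

section HalfAngle

variable (ν : ℝ)

theorem sinHalfAngle_nonneg : 0 ≤ sinHalfAngle ν :=
  mul_nonneg (sub_nonneg.2 (one_le_cosh _)) (sqrt_nonneg _)

theorem sinHalfAngle_sq :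
    sinHalfAngle ν ^ 2 = (cosh (π * ν) - 1) ^ 2 * (2 * cosh (π * ν) + 1) := by
  rw [sinHalfAngle, mul_pow, sq_sqrt (by positivity)]

theorem one_sub_sinHalfAngle_sq :
    1 - sinHalfAngle ν ^ 2 = cosh (π * ν) ^ 2 * (3 - 2 * cosh (π * ν)) := by
  rw [sinHalfAngle_sq]
  ring

theorem c₁_eq_one_sub_two_mul_sq : c₁ ν = 1 - 2 * sinHalfAngle ν ^ 2 := by
  simp only [c₁, mul_assoc, cosh_two_mul_eq, cosh_three_mul, sinHalfAngle_sq]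
  ring

theorem c₂_eq_sq_mul_one_sub_sq :
    c₂ ν = (4 * sinHalfAngle ν) ^ 2 * (1 - sinHalfAngle ν ^ 2) := by
  simp only [c₂, mul_assoc, cosh_two_mul_eq, cosh_three_mul, cosh_four_mul, cosh_five_mul,
    cosh_six_mul, mul_pow, sinHalfAngle_sq]
  ring

theorem sqrt_c₂ : √(c₂ ν) = 4 * sinHalfAngle ν * √(1 - sinHalfAngle ν ^ 2) := by
  have h_nonneg : 0 ≤ 4 * sinHalfAngle ν := mul_nonneg zero_le_four (sinHalfAngle_nonneg ν)
  rw [c₂_eq_sq_mul_one_sub_sq, sqrt_mul (sq_nonneg _), sqrt_sq h_nonneg]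

variable {ν}

theorem sinHalfAngle_lt_one (hν : cosh (π * ν) < 3 / 2) : sinHalfAngle ν < 1 := by
  have h_pos : 0 < 1 - sinHalfAngle ν ^ 2 := by
    rw [one_sub_sinHalfAngle_sq]
    exact mul_pos (pow_pos (cosh_pos _) 2) (by linarith)
  exact (sq_lt_one_iff₀ (sinHalfAngle_nonneg ν)).1 (sub_pos.1 h_pos)

/-- The hypothesis says `|ν| < (2/π) log ((1 + √5)/2)`. At the end point the complex number is
`-1`, whose principal argument is `π` instead of `-π`. -/
theorem arg_c₁_sub_sqrt_c₂ (hν : cosh (π * ν) < 3 / 2) :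
    Complex.arg ((c₁ ν : ℂ) - (Complex.I / 2) * (√(c₂ ν) : ℂ)) =
      -2 * arcsin (sinHalfAngle ν) := by
  rw [← arg_one_sub_two_mul_sq_sub_I_mul (by linarith [sinHalfAngle_nonneg ν])
    (sinHalfAngle_lt_one hν), c₁_eq_one_sub_two_mul_sq, sqrt_c₂]
  push_cast
  ring_nf

end HalfAngle

theorem tendsto_cosh_pi_mul : Tendsto (fun ν => cosh (π * ν)) (𝓝 0) (𝓝 1) :=
  Continuous.tendsto' (by fun_prop) 0 1 (by simp)

theorem isEquivalent_sinHalfAngle :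
    sinHalfAngle ~[𝓝 0] fun ν => √3 * π ^ 2 / 2 * ν ^ 2 := by
  have h_pi_mul : Tendsto (fun ν => π * ν) (𝓝 0) (𝓝 0) :=
    Continuous.tendsto' (by fun_prop) 0 0 (mul_zero π)
  have h_sqrt : (fun ν => √(2 * cosh (π * ν) + 1)) ~[𝓝 0] fun _ => √3 := by
    refine (isEquivalent_const_iff_tendsto (by positivity)).2 ?_
    convert ((tendsto_cosh_pi_mul.const_mul 2).add_const 1).sqrt using 2
    norm_num
  refine ((isEquivalent_cosh_sub_one.comp_tendsto h_pi_mul).mul h_sqrt).congr_right ?_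
  exact .of_forall fun ν => by simp only [Pi.mul_apply, Function.comp_apply]; ring

theorem tendsto_sinHalfAngle : Tendsto sinHalfAngle (𝓝 0) (𝓝 0) :=
  isEquivalent_sinHalfAngle.symm.tendsto_nhds (Continuous.tendsto' (by fun_prop) 0 0 (by simp))

theorem stmt_10_general :
    (fun ν : ℝ => Complex.arg ((c₁ ν : ℂ) - (Complex.I / 2) * (√(c₂ ν) : ℂ))) ~[𝓝 0]
      fun ν => -(√3 * π ^ 2) * ν ^ 2 := by
  have h_arcsin : (fun ν => arcsin (sinHalfAngle ν)) ~[𝓝 0] fun ν => √3 * π ^ 2 / 2 * ν ^ 2 :=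
    (isEquivalent_arcsin.comp_tendsto tendsto_sinHalfAngle).trans isEquivalent_sinHalfAngle
  have h_small : ∀ᶠ ν in 𝓝 0, cosh (π * ν) < 3 / 2 :=
    tendsto_cosh_pi_mul.eventually_lt_const (by norm_num)
  refine ((IsEquivalent.refl (u := fun _ => (-2 : ℝ))).mul h_arcsin).congr_left ?_
    |>.congr_right ?_
  · filter_upwards [h_small] with ν hν using (arg_c₁_sub_sqrt_c₂ hν).symm
  · exact .of_forall fun ν => by simp only [Pi.mul_apply]; ring

/-- as `ν → 0⁺`, `arg(c₁(ν) − (i/2)√(c₂(ν)))/ν² → −√3·π²`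
(`arg` the principal argument). -/
theorem stmt_10 :
    Filter.Tendsto
      (fun ν : ℝ =>
        Complex.arg ((c₁ ν : ℂ) - (Complex.I/2) * (Real.sqrt (c₂ ν) : ℂ)) / ν^2)
      (nhdsWithin 0 (Set.Ioi 0))
      (nhds (-(Real.sqrt 3 * Real.pi^2))) := by
  exact tendsto_div_of_isEquivalent_const_mul (stmt_10_general.mono nhdsWithin_le_nhds) <|
    eventually_mem_nhdsWithin.mono fun _ hν => pow_ne_zero 2 (ne_of_gt hν)
end

section
/- Let μ ∈ ℂ, let ν be a nonzero real number, and let d ∈ ℂ, and assume 2μ−1+2iν ≠ 0 and 2μ−1−2iν ≠ 0. Then for every integer k, the complex derivative of g at t_k(1) := −(d + kπ)/ν equals 2μ−1, and the complex derivative of g at t_k(2) := t_k(1) − (i/ν)·Log((2μ−1+2iν)/(2μ−1−2iν)) equals −(2μ−1), where Log is the principal branch of the complex logarithm. (In the notation of the pole-location algorithm, Y₁₁^{(1)} = −Y₁₁^{(2)} = 2μ−1.) -/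
open Complex

/-!
Put `a = 2μ - 1 + 2iν`, `b = 2μ - 1 - 2iν` and `E = exp (2i(d + νt))`. Since
`a² + b² = 2((2μ - 1)² - 4ν²)`, the function is `(E - 1)(b²E - a²) / (16ν²E)`, which vanishes at
`E = 1` and at `E = (a/b)²`. Its `t`-derivative is proportional to `b²E - a²E⁻¹`, and this takes
opposite values `b² - a²` and `a² - b²` at the two roots.
-/

/-- The function `g` with `ν` allowed to be complex: the leading term of the inverse of a
Painlevé VI transcendent, in the variable `t = log x`. The formula is kept in the shape of `g`, so
that `g μ ν d` is definitionally `leadingTerm μ ν d` for real `ν`. -/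
noncomputable def leadingTerm (μ ν d t : ℂ) : ℂ :=
  (2 * μ - 1 + 2 * I * ν) ^ 2 / (16 * ν ^ 2) * exp (-(2 * I * d)) * exp (-(2 * I * ν * t))
    - ((2 * μ - 1) ^ 2 - 4 * ν ^ 2) / (8 * ν ^ 2)
    + (2 * μ - 1 - 2 * I * ν) ^ 2 / (16 * ν ^ 2) * exp (2 * I * d) * exp (2 * I * ν * t)

theorem hasDerivAt_mul_exp_neg_sub_add_mul_exp (α β κ c t : ℂ) :
    HasDerivAt (fun s ↦ α * exp (-(c * s)) - κ + β * exp (c * s))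
      (c * (β * exp (c * t) - α * exp (-(c * t)))) t := by
  have linear : HasDerivAt (fun s ↦ c * s) c t := hasDerivAt_const_mul c
  refine (((linear.fun_neg.cexp.const_mul α).sub_const κ).fun_add
    (linear.cexp.const_mul β)).congr_deriv ?_
  ring

theorem exp_two_mul_I_mul_add_eq_one {ν : ℂ} (hν : ν ≠ 0) (d : ℂ) (k : ℤ) :
    exp (2 * I * (d + ν * -((d + k * Real.pi) / ν))) = 1 := by
  have phase : 2 * I * (d + ν * -((d + k * Real.pi) / ν)) = (-k : ℤ) * (2 * Real.pi * I) := by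
    push_cast
    field_simp
    ring
  rw [phase, exp_int_mul_two_pi_mul_I]

theorem exp_two_mul_I_mul_add_sub_log {ν z : ℂ} (hν : ν ≠ 0) (hz : z ≠ 0) (d t : ℂ) :
    exp (2 * I * (d + ν * (t - I / ν * log z))) = exp (2 * I * (d + ν * t)) * z ^ 2 := by
  have phase : 2 * I * (d + ν * (t - I / ν * log z)) =
      2 * I * (d + ν * t) + (2 : ℕ) * log z := by
    push_cast
    field_simp
    linear_combination -log z * I_sq
  rw [phase, exp_add, exp_nat_mul, exp_log hz]

theorem deriv_leadingTerm (μ ν d t : ℂ) :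
    deriv (leadingTerm μ ν d) t = 2 * I * ν / (16 * ν ^ 2) *
      ((2 * μ - 1 - 2 * I * ν) ^ 2 * exp (2 * I * (d + ν * t))
        - (2 * μ - 1 + 2 * I * ν) ^ 2 * (exp (2 * I * (d + ν * t)))⁻¹) := by
  have phase : 2 * I * (d + ν * t) = 2 * I * d + 2 * I * ν * t := by ring
  unfold leadingTerm
  rw [(hasDerivAt_mul_exp_neg_sub_add_mul_exp _ _ _ _ t).deriv, phase, exp_add, mul_inv,
    ← exp_neg, ← exp_neg]
  ring

theorem two_mul_I_mul_div_mul_sq_sub_sq (μ : ℂ) {ν : ℂ} (hν : ν ≠ 0) :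
    2 * I * ν / (16 * ν ^ 2) *
      ((2 * μ - 1 - 2 * I * ν) ^ 2 - (2 * μ - 1 + 2 * I * ν) ^ 2) = 2 * μ - 1 := by
  field_simp
  linear_combination -16 * ν * (2 * μ - 1) * I_sq

section Roots

variable {μ ν d t : ℂ}

theorem deriv_leadingTerm_of_exp_eq_one (hν : ν ≠ 0) (hexp : exp (2 * I * (d + ν * t)) = 1) :
    deriv (leadingTerm μ ν d) t = 2 * μ - 1 := by
  rw [deriv_leadingTerm, hexp, inv_one, mul_one, mul_one, two_mul_I_mul_div_mul_sq_sub_sq μ hν]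

theorem deriv_leadingTerm_of_exp_eq_div_sq (hν : ν ≠ 0)
    (ha : 2 * μ - 1 + 2 * I * ν ≠ 0) (hb : 2 * μ - 1 - 2 * I * ν ≠ 0)
    (hexp : exp (2 * I * (d + ν * t)) =
      ((2 * μ - 1 + 2 * I * ν) / (2 * μ - 1 - 2 * I * ν)) ^ 2) :
    deriv (leadingTerm μ ν d) t = -(2 * μ - 1) := by
  rw [deriv_leadingTerm, hexp, div_pow, inv_div, mul_div_cancel₀ _ (pow_ne_zero 2 hb),
    mul_div_cancel₀ _ (pow_ne_zero 2 ha), ← neg_sub, mul_neg, two_mul_I_mul_div_mul_sq_sub_sq μ hν]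

end Roots

theorem stmt_11_general (μ d : ℂ) {ν : ℂ} (hν : ν ≠ 0)
    (ha : 2 * μ - 1 + 2 * I * ν ≠ 0) (hb : 2 * μ - 1 - 2 * I * ν ≠ 0) (k : ℤ) :
    deriv (leadingTerm μ ν d) (-((d + k * Real.pi) / ν)) = 2 * μ - 1 ∧
      deriv (leadingTerm μ ν d) (-((d + k * Real.pi) / ν)
          - I / ν * log ((2 * μ - 1 + 2 * I * ν) / (2 * μ - 1 - 2 * I * ν))) =
        -(2 * μ - 1) := by
  have first_root := exp_two_mul_I_mul_add_eq_one hν d k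
  refine ⟨deriv_leadingTerm_of_exp_eq_one hν first_root,
    deriv_leadingTerm_of_exp_eq_div_sq hν ha hb ?_⟩
  rw [exp_two_mul_I_mul_add_sub_log hν (div_ne_zero ha hb), first_root, one_mul]

/-- the complex derivative of `g` at `t_k(1) = −(d+kπ)/ν` equals `2μ−1`,
and at `t_k(2) = t_k(1) − (i/ν)·Log((2μ−1+2iν)/(2μ−1−2iν))` it equals `−(2μ−1)`. -/
theorem stmt_11 (μ : ℂ) (ν : ℝ) (hν : ν ≠ 0) (d : ℂ)
    (h1 : 2*μ - 1 + 2*I*(ν:ℂ) ≠ 0) (h2 : 2*μ - 1 - 2*I*(ν:ℂ) ≠ 0) :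
    ∀ k : ℤ,
      deriv (g μ ν d) (-((d + (k:ℂ)*(Real.pi:ℂ)) / (ν:ℂ))) = 2*μ - 1 ∧
      deriv (g μ ν d) (-((d + (k:ℂ)*(Real.pi:ℂ)) / (ν:ℂ))
          - (I/(ν:ℂ)) * Complex.log ((2*μ - 1 + 2*I*(ν:ℂ)) / (2*μ - 1 - 2*I*(ν:ℂ))))
        = -(2*μ - 1) :=
  stmt_11_general μ d (ofReal_ne_zero.mpr hν) h1 h2
end

section
/- Let μ ∈ ℂ, let ν be a nonzero real number, and let d ∈ ℂ, and assume 2μ−1+2iν ≠ 0 and 2μ−1−2iν ≠ 0. Define the entire function Y₂ : ℂ → ℂ by Y₂(t) = A(ν)·e^{4id}e^{4iνt} + B(ν)·e^{2id}e^{2iνt} + C + B(−ν)·e^{−2id}e^{−2iνt} + A(−ν)·e^{−4id}e^{−4iνt}, where A(ν) := −(2μ−1−2iν)⁴/(512ν⁴), B(ν) := ((2μ−1)² + 8iν³)·(2μ−1−2iν)²/(128ν⁴), and C := −((2μ−1)² + 4ν²)·(3(2μ−1)² − 4ν²)/(256ν⁴). Then for every integer k, Y₂(t_k(1)) = μ −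 1/2 and Y₂(t_k(2)) = 1/2 − μ, where t_k(1) := −(d + kπ)/ν and t_k(2) := t_k(1) − (i/ν)·Log((2μ−1+2iν)/(2μ−1−2iν)) (Log the principal branch). (In the notation of the pole-location algorithm, Y₂₀^{(1)} = −Y₂₀^{(2)} = μ − 1/2; combined with Y₁₁^{(1)} = −Y₁₁^{(2)} = 2μ−1 this yields the leading pole correction Δ₂ = −Y₂₀/Y₁₁ = −1/2.) -/
open Complex

/-- `A(ν) = −(2μ−1−2iν)⁴/(512ν⁴)`. -/
noncomputable def Acoef (μ : ℂ) (ν : ℝ) : ℂ := -(2*μ - 1 - 2*I*(ν:ℂ))^4 / (512*(ν:ℂ)^4)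

/-- `B(ν) = ((2μ−1)² + 8iν³)·(2μ−1−2iν)²/(128ν⁴)`. -/
noncomputable def Bcoef (μ : ℂ) (ν : ℝ) : ℂ :=
  ((2*μ - 1)^2 + 8*I*(ν:ℂ)^3) * (2*μ - 1 - 2*I*(ν:ℂ))^2 / (128*(ν:ℂ)^4)

/-- `C = −((2μ−1)² + 4ν²)·(3(2μ−1)² − 4ν²)/(256ν⁴)`. -/
noncomputable def Ccoef (μ : ℂ) (ν : ℝ) : ℂ :=
  -((2*μ - 1)^2 + 4*(ν:ℂ)^2) * (3*(2*μ - 1)^2 - 4*(ν:ℂ)^2) / (256*(ν:ℂ)^4)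

/-- The second-order term `y₂` of the expansion of `1/y`, in the variable `t = log x`:
`Y₂(t) = A(ν)e^{4id}e^{4iνt} + B(ν)e^{2id}e^{2iνt} + C + B(−ν)e^{−2id}e^{−2iνt} + A(−ν)e^{−4id}e^{−4iνt}`. -/
noncomputable def Y₂ (μ : ℂ) (ν : ℝ) (d : ℂ) (t : ℂ) : ℂ :=
  Acoef μ ν * Complex.exp (4*I*d) * Complex.exp (4*I*(ν:ℂ)*t)
    + Bcoef μ ν * Complex.exp (2*I*d) * Complex.exp (2*I*(ν:ℂ)*t)
    + Ccoef μ ν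
    + Bcoef μ (-ν) * Complex.exp (-(2*I*d)) * Complex.exp (-(2*I*(ν:ℂ)*t))
    + Acoef μ (-ν) * Complex.exp (-(4*I*d)) * Complex.exp (-(4*I*(ν:ℂ)*t))

/-!
`Y₂` is determined by the leading term `y₁` through `y₂ = (y₁ - y₁² + y₁') / 2`, the derivative
being taken in `t = log x`, so at a zero of `y₁` it equals `y₁' / 2`. In terms of
`z = e^{2i(d + νt)}`, the zeros of `y₁` are `z = 1` and `z = r²` with `r = (2μ-1+2iν)/(2μ-1-2iν)`;
they are swapped by the involution `z ↦ r² / z`, which preserves `y₁` and changes the sign of `y₁'`,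
so that `y₁'` takes the opposite values `±(2μ-1)` there.
-/

/-- The oscillating exponential `z = e^{2i(d + νt)}`, in which `y₁` and `Y₂` are Laurent
polynomials. -/
noncomputable def phaseExp (ν d t : ℂ) : ℂ := exp (2 * I * (d + ν * t))

/-- The leading term `y₁` of the expansion of `1/y`, as a function of `t = log x`. Its normalization
makes `y₁' = 2μ - 1` at the zeros where `phaseExp ν d t = 1`. -/
noncomputable def y₁ (μ ν d t : ℂ) : ℂ :=
  ((2 * μ - 1 - 2 * I * ν) ^ 2 * phaseExp ν d t + (2 * μ - 1 + 2 * I * ν) ^ 2 * (phaseExp ν d t)⁻¹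
    - 2 * ((2 * μ - 1) ^ 2 - 4 * ν ^ 2)) / (16 * ν ^ 2)

section PhaseExp

variable (ν d t : ℂ)

lemma phaseExp_ne_zero : phaseExp ν d t ≠ 0 := exp_ne_zero _

lemma hasDerivAt_phaseExp : HasDerivAt (phaseExp ν d) (2 * I * ν * phaseExp ν d t) t := by
  have hphase : HasDerivAt (fun s ↦ 2 * I * (d + ν * s)) (2 * I * ν) t := by
    simpa using (((hasDerivAt_id t).const_mul ν).const_add d).const_mul (2 * I)
  exact hphase.cexp.congr_deriv (mul_comm _ _)

variable {ν}

lemma phaseExp_sub_I_div_mul (hν : ν ≠ 0) (s : ℂ) :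
    phaseExp ν d (t - I / ν * s) = phaseExp ν d t * exp s ^ 2 := by
  have hphase : 2 * I * (d + ν * (t - I / ν * s)) = 2 * I * (d + ν * t) + (2 : ℕ) * s := by
    field_simp
    linear_combination -2 * s * I_sq
  rw [phaseExp, phaseExp, hphase, exp_add, exp_nat_mul]

lemma phaseExp_neg_add_int_mul_pi_div (hν : ν ≠ 0) (k : ℤ) :
    phaseExp ν d (-((d + k * Real.pi) / ν)) = 1 := by
  have hphase : 2 * I * (d + ν * (-((d + k * Real.pi) / ν))) = (-k : ℤ) * (2 * Real.pi * I) := by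
    push_cast
    field_simp
    ring
  rw [phaseExp, hphase, exp_int_mul_two_pi_mul_I]

end PhaseExp

section LeadingTerm

variable (μ : ℂ) {ν d t : ℂ}

lemma deriv_y₁ (hν : ν ≠ 0) :
    deriv (y₁ μ ν d) t = I * ((2 * μ - 1 - 2 * I * ν) ^ 2 * phaseExp ν d t
      - (2 * μ - 1 + 2 * I * ν) ^ 2 * (phaseExp ν d t)⁻¹) / (8 * ν) := by
  have hz := hasDerivAt_phaseExp ν d t
  have hy := (((hz.const_mul ((2 * μ - 1 - 2 * I * ν) ^ 2)).add
    ((hz.inv (phaseExp_ne_zero ν d t)).const_mul ((2 * μ - 1 + 2 * I * ν) ^ 2))).sub_const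
      (2 * ((2 * μ - 1) ^ 2 - 4 * ν ^ 2))).div_const (16 * ν ^ 2)
  refine hy.deriv.trans ?_
  have := phaseExp_ne_zero ν d t
  field_simp
  ring

variable {μ}

lemma y₁_eq_zero_of_phaseExp_eq_one (hz : phaseExp ν d t = 1) : y₁ μ ν d t = 0 := by
  rw [y₁, hz]
  linear_combination (1 / 2 : ℂ) * ν ^ 2 / ν ^ 2 * I_sq

lemma deriv_y₁_of_phaseExp_eq_one (hν : ν ≠ 0) (hz : phaseExp ν d t = 1) :
    deriv (y₁ μ ν d) t = 2 * μ - 1 := by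
  rw [deriv_y₁ μ hν, hz]
  field_simp
  linear_combination -8 * (2 * μ - 1) * ν * I_sq

lemma sq_mul_inv_phaseExp_eq_sq
    (hz : (2 * μ - 1 - 2 * I * ν) ^ 2 * phaseExp ν d t = (2 * μ - 1 + 2 * I * ν) ^ 2) :
    (2 * μ - 1 + 2 * I * ν) ^ 2 * (phaseExp ν d t)⁻¹ = (2 * μ - 1 - 2 * I * ν) ^ 2 := by
  rw [← hz, mul_inv_cancel_right₀ (phaseExp_ne_zero ν d t)]

lemma y₁_eq_zero_of_sq_mul_phaseExp_eq_sq
    (hz : (2 * μ - 1 - 2 * I * ν) ^ 2 * phaseExp ν d t = (2 * μ - 1 + 2 * I * ν) ^ 2) :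
    y₁ μ ν d t = 0 := by
  rw [y₁, sq_mul_inv_phaseExp_eq_sq hz, hz]
  linear_combination (1 / 2 : ℂ) * ν ^ 2 / ν ^ 2 * I_sq

lemma deriv_y₁_of_sq_mul_phaseExp_eq_sq (hν : ν ≠ 0)
    (hz : (2 * μ - 1 - 2 * I * ν) ^ 2 * phaseExp ν d t = (2 * μ - 1 + 2 * I * ν) ^ 2) :
    deriv (y₁ μ ν d) t = 1 - 2 * μ := by
  rw [deriv_y₁ μ hν, sq_mul_inv_phaseExp_eq_sq hz, hz]
  field_simp
  linear_combination 8 * (2 * μ - 1) * ν * I_sq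

end LeadingTerm

section SecondTerm

variable (μ : ℂ) (ν : ℝ) (d t : ℂ)

lemma Y₂_eq_laurent_phaseExp :
    Y₂ μ ν d t = Acoef μ ν * phaseExp ν d t ^ 2 + Bcoef μ ν * phaseExp ν d t + Ccoef μ ν
      + Bcoef μ (-ν) * (phaseExp ν d t)⁻¹ + Acoef μ (-ν) * (phaseExp ν d t)⁻¹ ^ 2 := by
  simp only [Y₂, phaseExp, mul_assoc (Acoef _ _), mul_assoc (Bcoef _ _), ← exp_add, ← exp_neg,
    ← exp_nat_mul]
  ring_nf

variable {ν}

lemma Y₂_eq_y₁_sub_sq_add_deriv (hν : ν ≠ 0) :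
    Y₂ μ ν d t = (y₁ μ ν d t - y₁ μ ν d t ^ 2 + deriv (y₁ μ ν d) t) / 2 := by
  have hν' : (ν : ℂ) ≠ 0 := ofReal_ne_zero.mpr hν
  have hz := phaseExp_ne_zero ν d t
  rw [Y₂_eq_laurent_phaseExp, deriv_y₁ μ hν', y₁, Acoef, Bcoef, Ccoef, Acoef, Bcoef]
  push_cast
  rw [mul_neg, sub_neg_eq_add]
  set z := phaseExp ν d t
  set p := 2 * μ - 1 + 2 * I * (ν : ℂ)
  set q := 2 * μ - 1 - 2 * I * (ν : ℂ)
  have hpq : p * q = (2 * μ - 1) ^ 2 + 4 * (ν : ℂ) ^ 2 := by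
    linear_combination -4 * (ν : ℂ) ^ 2 * I_sq
  clear_value p q z
  linear_combination (norm := (field_simp; ring))
    (p * q + (2 * μ - 1) ^ 2 + 4 * (ν : ℂ) ^ 2) / (256 * (ν : ℂ) ^ 4) * hpq

variable {μ d t}

lemma Y₂_eq_half_deriv_of_y₁_eq_zero (hν : ν ≠ 0) (hy : y₁ μ ν d t = 0) :
    Y₂ μ ν d t = deriv (y₁ μ ν d) t / 2 := by
  rw [Y₂_eq_y₁_sub_sq_add_deriv μ d t hν, hy]
  ring

end SecondTerm

/-- for every integer `k`, `Y₂(t_k(1)) = μ − 1/2` and `Y₂(t_k(2)) = 1/2 − μ`,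
where `t_k(1) = −(d+kπ)/ν` and `t_k(2) = t_k(1) − (i/ν)·Log((2μ−1+2iν)/(2μ−1−2iν))`. -/
theorem stmt_12 (μ : ℂ) (ν : ℝ) (hν : ν ≠ 0) (d : ℂ)
    (h1 : 2*μ - 1 + 2*I*(ν:ℂ) ≠ 0) (h2 : 2*μ - 1 - 2*I*(ν:ℂ) ≠ 0) :
    ∀ k : ℤ,
      Y₂ μ ν d (-((d + (k:ℂ)*(Real.pi:ℂ)) / (ν:ℂ))) = μ - 1/2 ∧
      Y₂ μ ν d (-((d + (k:ℂ)*(Real.pi:ℂ)) / (ν:ℂ))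
          - (I/(ν:ℂ)) * Complex.log ((2*μ - 1 + 2*I*(ν:ℂ)) / (2*μ - 1 - 2*I*(ν:ℂ))))
        = 1/2 - μ := by
  intro k
  have hν' : (ν : ℂ) ≠ 0 := ofReal_ne_zero.mpr hν
  have hz₁ := phaseExp_neg_add_int_mul_pi_div d hν' k
  constructor
  · rw [Y₂_eq_half_deriv_of_y₁_eq_zero hν (y₁_eq_zero_of_phaseExp_eq_one hz₁),
      deriv_y₁_of_phaseExp_eq_one hν' hz₁]
    ring
  · set t₁ : ℂ := -((d + k * Real.pi) / ν)
    set L := log ((2 * μ - 1 + 2 * I * ν) / (2 * μ - 1 - 2 * I * ν)) with hL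
    have hz₂ : (2 * μ - 1 - 2 * I * ν) ^ 2 * phaseExp ν d (t₁ - I / ν * L)
        = (2 * μ - 1 + 2 * I * ν) ^ 2 := by
      rw [phaseExp_sub_I_div_mul d t₁ hν', hz₁, one_mul, hL, exp_log (div_ne_zero h1 h2), ← mul_pow,
        mul_div_cancel₀ _ h2]
    rw [Y₂_eq_half_deriv_of_y₁_eq_zero hν (y₁_eq_zero_of_sq_mul_phaseExp_eq_sq hz₂),
      deriv_y₁_of_sq_mul_phaseExp_eq_sq hν' hz₂]
    ring
end

section
/- Let μ ∈ ℂ, let ν be a nonzero real number, and let d ∈ ℂ, and define w : ℂ → ℂ by w(t) := 1/g(t). Then at every t ∈ ℂ with g(t) ≠ 0, the function w is twice complex-differentiable in a neighbourhood of t and satisfies 2·w(t)·(w(t) − 1)·w''(t) − (3·w(t) − 2)·(w'(t))² − (2μ−1)²·w(t)³·(w(t) − 1)² = 0. (This is the leading-order equation P₀ = 0 extracted from PVI_μ for x → 0; in the x-variable, with x·d/dx = d/dt, it reads 2y(y−1)(x²y'' + xy') − (3y−2)(xy')² − (2μ−1)²y³(y−1)² = 0, and w = 1/y₁ is a solution.)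 -/
open Complex

/-- `w = 1/g`. -/
noncomputable def w (μ : ℂ) (ν : ℝ) (d : ℂ) : ℂ → ℂ := fun t => 1 / g μ ν d t

/-!
The profile `g` is a Laurent polynomial `f = A z⁻¹ + B + C z` in `z = e^{κt}` with `κ = 2iν`, and
the numerator `C z² + (B - 1) z + A` of `f - 1` has discriminant zero: `(1 - B)² = 4AC`. Any such
`f` satisfies `f'' = κ²(f - B)` and has the first integral `f'² = κ²((f - B)² - (1 - B)²)`.
Multiplied by `f⁵`, the differential equation for `1/f` is a polynomial relation in `f`, `f'`, `f''`
which follows from these two identities for the parameter `κ²(2B - 1)`, here equal to `(2μ - 1)²`.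
-/

open scoped Topology

section Inversion

variable {𝕜 : Type*} [NontriviallyNormedField 𝕜] {f : 𝕜 → 𝕜} {t : 𝕜}

lemma deriv_deriv_inv_eq (hf : ∀ᶠ s in 𝓝 t, DifferentiableAt 𝕜 f s)
    (hf' : DifferentiableAt 𝕜 (deriv f) t) (ht : f t ≠ 0) :
    deriv (deriv f⁻¹) t = (2 * deriv f t ^ 2 - f t * deriv (deriv f) t) / f t ^ 3 := by
  have hft : DifferentiableAt 𝕜 f t := hf.self_of_nhds
  have deriv_inv_near : deriv f⁻¹ =ᶠ[𝓝 t] -deriv f / f ^ 2 := by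
    filter_upwards [hf, hft.continuousAt.eventually_ne ht] with s hs hs0
    exact deriv_inv'' hs hs0
  rw [deriv_inv_near.deriv_eq, deriv_div hf'.neg (hft.pow 2) (pow_ne_zero 2 ht),
    deriv.neg, deriv_pow hft]
  simp only [Pi.neg_apply, Pi.pow_apply]
  field_simp
  ring

/-- The leading-order part `P₀` of the sixth Painlevé equation as `x → 0`, as a differential
operator in `t = log x`; the parameter `m` stands for `(2μ - 1)²`. -/
noncomputable def leadingPVI (m : 𝕜) (y : 𝕜 → 𝕜) (t : 𝕜) : 𝕜 :=
  2 * y t * (y t - 1) * deriv (deriv y) t - (3 * y t - 2) * deriv y t ^ 2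
    - m * y t ^ 3 * (y t - 1) ^ 2

lemma leadingPVI_inv (m : 𝕜) (hf : ∀ᶠ s in 𝓝 t, DifferentiableAt 𝕜 f s)
    (hf' : DifferentiableAt 𝕜 (deriv f) t) (ht : f t ≠ 0) :
    leadingPVI m f⁻¹ t =
      ((1 - 2 * f t) * deriv f t ^ 2 - 2 * f t * (1 - f t) * deriv (deriv f) t
        - m * (1 - f t) ^ 2) / f t ^ 5 := by
  rw [leadingPVI, deriv_deriv_inv_eq hf hf' ht, deriv_inv'' hf.self_of_nhds ht, Pi.inv_apply]
  field_simp
  ring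

end Inversion

/-- The Laurent polynomial `A z⁻¹ + B + C z` in the exponential `z = e^{κt}`; the functions `g` are
of this form with `κ = 2iν`. -/
noncomputable def expLaurent (A B C κ t : ℂ) : ℂ :=
  A * exp (-(κ * t)) + B + C * exp (κ * t)

namespace expLaurent

variable (A B C κ t : ℂ)

lemma analyticAt : AnalyticAt ℂ (expLaurent A B C κ) t := by
  unfold expLaurent
  fun_prop

lemma deriv_eq : deriv (expLaurent A B C κ) = expLaurent (-(κ * A)) 0 (κ * C) κ := by
  funext s
  have hlin : HasDerivAt (fun u => κ * u) κ s := by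
    simpa using (hasDerivAt_id s).const_mul κ
  refine HasDerivAt.deriv <| HasDerivAt.congr_deriv
    (((hlin.neg.cexp.const_mul A).add_const B).add (hlin.cexp.const_mul C)) ?_
  simp only [expLaurent, Pi.neg_apply]
  ring

lemma deriv_deriv_eq :
    deriv (deriv (expLaurent A B C κ)) t = κ ^ 2 * (expLaurent A B C κ t - B) := by
  simp only [deriv_eq, expLaurent]
  ring

lemma deriv_sq :
    deriv (expLaurent A B C κ) t ^ 2 =
      κ ^ 2 * ((expLaurent A B C κ t - B) ^ 2 - 4 * A * C) := by
  have hexp : exp (-(κ * t)) * exp (κ * t) = 1 := by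
    rw [← exp_add, neg_add_cancel, exp_zero]
  simp only [deriv_eq, expLaurent]
  linear_combination (-4 * κ ^ 2 * A * C) * hexp

variable {A B C κ t}

lemma leadingPVI_inv_eq_zero (hBAC : (1 - B) ^ 2 = 4 * A * C) (ht : expLaurent A B C κ t ≠ 0) :
    leadingPVI (κ ^ 2 * (2 * B - 1)) (expLaurent A B C κ)⁻¹ t = 0 := by
  have han : AnalyticAt ℂ (expLaurent A B C κ) t := analyticAt A B C κ t
  rw [leadingPVI_inv _ (analyticAt_iff_eventually_differentiableAt.mp han)
    han.deriv.differentiableAt ht, deriv_sq, deriv_deriv_eq, ← hBAC]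
  ring

end expLaurent

theorem stmt_13_general {A B C κ t : ℂ} (hBAC : (1 - B) ^ 2 = 4 * A * C)
    (ht : expLaurent A B C κ t ≠ 0) :
    (∀ᶠ s in 𝓝 t, DifferentiableAt ℂ (expLaurent A B C κ)⁻¹ s) ∧
    (∀ᶠ s in 𝓝 t, DifferentiableAt ℂ (deriv (expLaurent A B C κ)⁻¹) s) ∧
    leadingPVI (κ ^ 2 * (2 * B - 1)) (expLaurent A B C κ)⁻¹ t = 0 := by
  have han : AnalyticAt ℂ (expLaurent A B C κ)⁻¹ t := (expLaurent.analyticAt A B C κ t).inv ht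
  exact ⟨analyticAt_iff_eventually_differentiableAt.mp han,
    analyticAt_iff_eventually_differentiableAt.mp han.deriv,
    expLaurent.leadingPVI_inv_eq_zero hBAC ht⟩

lemma w_eq_inv_g (μ : ℂ) (ν : ℝ) (d : ℂ) : w μ ν d = (g μ ν d)⁻¹ :=
  funext fun _ => one_div _

lemma exists_g_eq_expLaurent (μ : ℂ) {ν : ℝ} (hν : ν ≠ 0) (d : ℂ) :
    ∃ A B C : ℂ, g μ ν d = expLaurent A B C (2 * I * ν) ∧ (1 - B) ^ 2 = 4 * A * C ∧
      (2 * I * (ν : ℂ)) ^ 2 * (2 * B - 1) = (2 * μ - 1) ^ 2 := by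
  have hν' : (ν : ℂ) ≠ 0 := ofReal_ne_zero.mpr hν
  refine ⟨(2 * μ - 1 + 2 * I * ν) ^ 2 / (16 * ν ^ 2) * exp (-(2 * I * d)),
    -(((2 * μ - 1) ^ 2 - 4 * ν ^ 2) / (8 * ν ^ 2)),
    (2 * μ - 1 - 2 * I * ν) ^ 2 / (16 * ν ^ 2) * exp (2 * I * d), ?_, ?_, ?_⟩
  · funext s
    simp only [g, expLaurent, sub_eq_add_neg]
  · have hexp : exp (-(2 * I * d)) * exp (2 * I * d) = 1 := by
      rw [← exp_add, neg_add_cancel, exp_zero]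
    have hnorm : (2 * μ - 1 + 2 * I * ν) * (2 * μ - 1 - 2 * I * ν) =
        (2 * μ - 1) ^ 2 + 4 * (ν : ℂ) ^ 2 := by
      linear_combination (-4 * (ν : ℂ) ^ 2) * I_sq
    calc (1 - -(((2 * μ - 1) ^ 2 - 4 * (ν : ℂ) ^ 2) / (8 * ν ^ 2))) ^ 2
        = 4 * ((2 * μ - 1) ^ 2 + 4 * (ν : ℂ) ^ 2) ^ 2 / (16 * ν ^ 2) ^ 2 := by
          field_simp
          ring
      _ = 4 * ((2 * μ - 1 + 2 * I * ν) * (2 * μ - 1 - 2 * I * ν)) ^ 2 / (16 * ν ^ 2) ^ 2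
            * (exp (-(2 * I * d)) * exp (2 * I * d)) := by
          rw [hnorm, hexp, mul_one]
      _ = _ := by ring
  · rw [mul_pow, mul_pow, I_sq]
    field_simp
    ring

/-- at every `t` with `g(t) ≠ 0`, the function `w = 1/g` is twice
complex-differentiable in a neighbourhood of `t` and satisfies
`2w(w−1)w'' − (3w−2)(w')² − (2μ−1)²w³(w−1)² = 0`. -/
theorem stmt_13 (μ : ℂ) (ν : ℝ) (hν : ν ≠ 0) (d : ℂ) (t : ℂ) (ht : g μ ν d t ≠ 0) :
    (∀ᶠ s in nhds t, DifferentiableAt ℂ (w μ ν d) s) ∧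
    (∀ᶠ s in nhds t, DifferentiableAt ℂ (deriv (w μ ν d)) s) ∧
    2 * w μ ν d t * (w μ ν d t - 1) * deriv (deriv (w μ ν d)) t
      - (3 * w μ ν d t - 2) * (deriv (w μ ν d) t)^2
      - (2*μ - 1)^2 * (w μ ν d t)^3 * (w μ ν d t - 1)^2 = 0 := by
  obtain ⟨A, B, C, hg, hBAC, hm⟩ := exists_g_eq_expLaurent μ hν d
  rw [hg] at ht
  rw [w_eq_inv_g, hg, ← hm]
  exact stmt_13_general hBAC ht
end

section
/- Let μ ∈ ℂ, d₁ ∈ ℂ, and t ∈ ℂ, and let d : ℝ → ℂ be any function such that d(ν)/ν → d₁ as ν → 0 through nonzero real values. For each nonzero real ν let g_ν denote the function g with parameters (μ, ν, d(ν)). Then, as ν → 0 through nonzero real values, g_ν(t) tends to P₁(t) := (1/2 − μ)·((μ − 1/2)·(t + d₁) − 2)·(t + d₁). (Writing t = log x, this says lim_{ν→0} y₁(x) = −((2μ−1)²/4)·(log x)² − ((2μ−1)((2μ−1)d₁ − 2)/2)·log x − ((2μ−1)((2μ−1)d₁ − 4)d₁)/4 for x ≠ 0, i.e. the oscillatory leading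 term degenerates to a polynomial in log x.) -/
open Complex

/-! With phase `φ = d + νt` and `a = 2μ - 1`, the two oscillating terms of `g` are `1/(16ν²)` times
the squares of `(a ± 2iν) exp(∓iφ)`, that is, of `u ± iv` with `u = a cos φ + 2ν sin φ` and
`v = 2ν cos φ - a sin φ`. Since `u² + v² = a² + 4ν²`, the poles at `ν = 0` cancel and
`g = 1 - (cos φ - (μ - 1/2) (sin φ / ν))²`. As `ν → 0` we have `φ / ν → t + d₁`, so `φ → 0` and
`sin φ / ν → t + d₁`. -/

open Filter Topology

lemma sq_mul_exp_add_sq_mul_exp (a b φ : ℂ) :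
    (a + b * I) ^ 2 * exp (-(2 * φ * I)) + (a - b * I) ^ 2 * exp (2 * φ * I) =
      2 * (a ^ 2 + b ^ 2) - 4 * (b * cos φ - a * sin φ) ^ 2 := by
  set u := a * cos φ + b * sin φ
  set v := b * cos φ - a * sin φ
  have rotate_neg : (a + b * I) * exp (-φ * I) = u + v * I := by
    rw [exp_mul_I, cos_neg, sin_neg]
    linear_combination -(b * sin φ) * I_sq
  have rotate_pos : (a - b * I) * exp (φ * I) = u - v * I := by
    rw [exp_mul_I]
    linear_combination -(b * sin φ) * I_sq
  have sq_add_sq_eq : u ^ 2 + v ^ 2 = a ^ 2 + b ^ 2 := by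
    linear_combination (a ^ 2 + b ^ 2) * sin_sq_add_cos_sq φ
  calc
    _ = ((a + b * I) * exp (-φ * I)) ^ 2 + ((a - b * I) * exp (φ * I)) ^ 2 := by
      simp only [mul_pow, ← exp_nat_mul]
      ring_nf
    _ = (u + v * I) ^ 2 + (u - v * I) ^ 2 := by rw [rotate_neg, rotate_pos]
    _ = 2 * (a ^ 2 + b ^ 2) - 4 * v ^ 2 := by
      linear_combination 2 * sq_add_sq_eq + 2 * v ^ 2 * I_sq

lemma g_eq_one_sub_sq (μ d t : ℂ) {ν : ℝ} (hν : ν ≠ 0) :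
    g μ ν d t =
      1 - (cos (d + ν * t) - (μ - 1 / 2) * (sin (d + ν * t) / ν)) ^ 2 := by
  have hν' : (ν : ℂ) ≠ 0 := ofReal_ne_zero.mpr hν
  have exp_neg_phase :
      exp (-(2 * (d + ν * t) * I)) = exp (-(2 * I * d)) * exp (-(2 * I * ν * t)) := by
    rw [← exp_add]
    ring_nf
  have exp_phase : exp (2 * (d + ν * t) * I) = exp (2 * I * d) * exp (2 * I * ν * t) := by
    rw [← exp_add]
    ring_nf
  have g_eq_div : g μ ν d t =
      ((2 * μ - 1 + 2 * ν * I) ^ 2 * exp (-(2 * (d + ν * t) * I)) +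
        (2 * μ - 1 - 2 * ν * I) ^ 2 * exp (2 * (d + ν * t) * I)) / (16 * ν ^ 2) -
      ((2 * μ - 1) ^ 2 - 4 * ν ^ 2) / (8 * ν ^ 2) := by
    rw [g, exp_neg_phase, exp_phase]
    ring
  rw [g_eq_div, sq_mul_exp_add_sq_mul_exp]
  field_simp
  ring

section Limits

variable {α 𝕜 : Type*} {l : Filter α} {c : 𝕜}

lemma tendsto_zero_of_tendsto_div [NormedField 𝕜] {u v : α → 𝕜} (hv : Tendsto v l (𝓝 0))
    (hv_ne : ∀ᶠ x in l, v x ≠ 0) (huv : Tendsto (fun x => u x / v x) l (𝓝 c)) :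
    Tendsto u l (𝓝 0) :=
  have u_isBigO : u =O[l] v :=
    Asymptotics.isBigO_of_div_tendsto_nhds (hv_ne.mono fun _ hx h => absurd h hx) c huv
  u_isBigO.trans_tendsto hv

lemma tendsto_sub_div_of_hasDerivAt [NontriviallyNormedField 𝕜] {f : 𝕜 → 𝕜} {f' x : 𝕜}
    {u v : α → 𝕜} (hf : HasDerivAt f f' x) (hu : Tendsto u l (𝓝 0))
    (huv : Tendsto (fun y => u y / v y) l (𝓝 c)) :
    Tendsto (fun y => (f (x + u y) - f x) / v y) l (𝓝 (c * f')) := by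
  have huv' : Tendsto (fun y => (v y)⁻¹ • u y) l (𝓝 c) := by
    simpa only [smul_eq_mul, inv_mul_eq_div] using huv
  have difference_quotient :=
    hf.hasFDerivAt.hasFDerivWithinAt.lim hu (.of_forall fun _ => Set.mem_univ _) huv'
  simpa [inv_mul_eq_div] using difference_quotient

end Limits

/-- if `d(ν)/ν → d₁` as `ν → 0` through nonzero reals, then for each
`t ∈ ℂ` the function `g` with parameters `(μ, ν, d(ν))` tends, as `ν → 0` through
nonzero reals, to `P₁(t) = (1/2 − μ)·((μ − 1/2)(t + d₁) − 2)·(t + d₁)`. -/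
theorem stmt_14 (μ d₁ t : ℂ) (d : ℝ → ℂ)
    (hd : Filter.Tendsto (fun ν : ℝ => d ν / (ν:ℂ)) (nhdsWithin 0 {(0:ℝ)}ᶜ) (nhds d₁)) :
    Filter.Tendsto (fun ν : ℝ => g μ ν (d ν) t) (nhdsWithin 0 {(0:ℝ)}ᶜ)
      (nhds ((1/2 - μ) * ((μ - 1/2) * (t + d₁) - 2) * (t + d₁))) := by
  have ν_ne : ∀ᶠ ν : ℝ in 𝓝[≠] 0, ν ≠ 0 := self_mem_nhdsWithin
  have ν_tendsto : Tendsto (fun ν : ℝ => (ν : ℂ)) (𝓝[≠] 0) (𝓝 0) :=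
    (continuous_ofReal.tendsto' 0 0 ofReal_zero).mono_left nhdsWithin_le_nhds
  have ratio_tendsto : Tendsto (fun ν : ℝ => (d ν + ν * t) / ν) (𝓝[≠] 0) (𝓝 (t + d₁)) :=
    (hd.const_add t).congr' <| ν_ne.mono fun ν hν => by
      have hν' : (ν : ℂ) ≠ 0 := ofReal_ne_zero.mpr hν
      field_simp
      ring
  have phase_tendsto : Tendsto (fun ν : ℝ => d ν + ν * t) (𝓝[≠] 0) (𝓝 0) :=
    tendsto_zero_of_tendsto_div ν_tendsto (ν_ne.mono fun _ => ofReal_ne_zero.mpr) ratio_tendsto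
  have cos_tendsto : Tendsto (fun ν : ℝ => cos (d ν + ν * t)) (𝓝[≠] 0) (𝓝 1) :=
    (continuous_cos.tendsto' 0 1 cos_zero).comp phase_tendsto
  have sin_tendsto : Tendsto (fun ν : ℝ => sin (d ν + ν * t) / ν) (𝓝[≠] 0) (𝓝 (t + d₁)) := by
    simpa using tendsto_sub_div_of_hasDerivAt (hasDerivAt_sin 0) phase_tendsto ratio_tendsto
  have limit_eq : (1/2 - μ) * ((μ - 1/2) * (t + d₁) - 2) * (t + d₁) =
      1 - (1 - (μ - 1/2) * (t + d₁)) ^ 2 := by ring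
  rw [limit_eq]
  exact (((cos_tendsto.sub (sin_tendsto.const_mul (μ - 1/2))).pow 2).const_sub 1).congr' <|
    ν_ne.mono fun ν hν => (g_eq_one_sub_sq μ (d ν) t hν).symm
end

section
/- Define the power series F(z) := Σ_{n≥0} ((1/2)_n / n!)²·zⁿ and F₁(z) := Σ_{n≥0} ((1/2)_n / n!)²·( 4·Σ_{k=1}^{n} 1/(2k−1) − 2·Σ_{k=1}^{n} 1/k − 4·ln 2 )·zⁿ, where (1/2)_n := Π_{j=0}^{n−1}(1/2 + j); both series converge for |z| < 1. Then there exist ρ > 0 and a function ξ, analytic on the disk |x| < ρ with ξ(0) = 0, satisfying ξ(x) = (x/16)·exp( −F₁(ξ(x))/F(ξ(x)) ) for all |x| < ρ, and whose Taylor expansion at 0 begins ξ(x) = x − (1/2)x² + (11/64)x³ − (3/64)x⁴ + O(x⁵). -/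
open Complex Asymptotics

/-- The Pochhammer symbol `(1/2)_n = ∏_{j=0}^{n−1}(1/2 + j)`. -/
noncomputable def poch (n : ℕ) : ℝ := ∏ j ∈ Finset.range n, ((1:ℝ)/2 + j)

/-- `F(z) = Σ_{n≥0} ((1/2)_n/n!)²·zⁿ`, i.e. the hypergeometric function `F(1/2,1/2,1;z)`. -/
noncomputable def F (z : ℂ) : ℂ :=
  ∑' n : ℕ, ((poch n / n.factorial)^2 : ℝ) * z^n

/-- `F₁(z) = Σ_{n≥0} ((1/2)_n/n!)²·(4Σ_{k=1}^n 1/(2k−1) − 2Σ_{k=1}^n 1/k − 4ln2)·zⁿ`. -/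
noncomputable def F₁ (z : ℂ) : ℂ :=
  ∑' n : ℕ, (((poch n / n.factorial)^2 *
    (4*(∑ k ∈ Finset.Icc 1 n, 1/(2*(k:ℝ) - 1)) - 2*(∑ k ∈ Finset.Icc 1 n, 1/(k:ℝ))
      - 4*Real.log 2) : ℝ)) * z^n

/-!
The map `z ↦ 16 z exp(F₁(z)/F(z))` is analytic at `0` and tangent to the identity there, because
`F(0) = 1` and `F₁(0) = -4 ln 2`, so it has an analytic local inverse `ξ`; inverting
`16 ξ exp(F₁(ξ)/F(ξ)) = x` is the fixed-point equation. The factor `16` is absorbed as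
`exp(4 ln 2)`, and then `F₁/F + 4 ln 2` has rational Taylor coefficients, giving the expansion
`z + z²/2 + 21z³/64 + 31z⁴/128 + O(z⁵)`. Since `ξ` is Lipschitz near `0`, its expansion only has to
be checked by substituting it into this quartic.
-/

open Filter Topology NNReal

section EqModPow

variable {𝕜 : Type*} [NontriviallyNormedField 𝕜]

/-- Congruence of germs at `0` modulo `z ^ n`, i.e. `f = g + O(z ^ n)`: for analytic functions,
equality of the Taylor polynomials of degree less than `n`. -/
def EqModPow (n : ℕ) (f g : 𝕜 → 𝕜) : Prop :=
  (fun z => f z - g z) =O[𝓝 0] fun z => z ^ n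

namespace EqModPow

variable {n : ℕ} {f g h p r : 𝕜 → 𝕜}

theorem symm (hfg : EqModPow n f g) : EqModPow n g f :=
  IsBigO.symm hfg

theorem trans (hfg : EqModPow n f g) (hgh : EqModPow n g h) : EqModPow n f h :=
  IsBigO.triangle hfg hgh

theorem congr_left (hfg : EqModPow n f g) (hfh : f =ᶠ[𝓝 0] h) : EqModPow n h g :=
  IsBigO.congr' hfg (hfh.sub .rfl) .rfl

theorem mono {m : ℕ} (hmn : m ≤ n) (hfg : EqModPow n f g) : EqModPow m f g := by
  rcases hmn.eq_or_lt with rfl | hlt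
  · exact hfg
  · exact IsBigO.trans hfg (isLittleO_pow_pow hlt).isBigO

theorem of_sub_eq_pow_mul (hr : ContinuousAt r 0) (hfg : ∀ z, f z - g z = z ^ n * r z) :
    EqModPow n f g := by
  have hpow_mul : (fun z => z ^ n * r z) =O[𝓝 0] fun z => z ^ n := by
    simpa only [mul_one] using (isBigO_refl (fun z : 𝕜 => z ^ n) _).mul (hr.isBigO_one 𝕜)
  exact hpow_mul.congr_left fun z => (hfg z).symm

theorem isBigO_norm_sub_zero_pow (hfg : EqModPow n f g) :
    (fun z => f z - g z) =O[𝓝 0] fun z => ‖z - 0‖ ^ n := by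
  simpa only [sub_zero, norm_pow] using IsBigO.norm_right hfg

theorem apply_zero (hfg : EqModPow n f g) (hn : n ≠ 0) : f 0 = g 0 :=
  sub_eq_zero.1 (hfg.isBigO_norm_sub_zero_pow.eq_zero_of_norm_pow hn)

theorem continuousAt (hfg : EqModPow n f g) (hn : n ≠ 0) (hg : ContinuousAt g 0) :
    ContinuousAt f 0 := by
  have hpow : Tendsto (fun z : 𝕜 => z ^ n) (𝓝 0) (𝓝 0) := by
    simpa [hn] using (continuous_pow n).tendsto (0 : 𝕜)
  have hsub : Tendsto (fun z => f z - g z) (𝓝 0) (𝓝 0) := IsBigO.trans_tendsto hfg hpow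
  simpa [ContinuousAt, hfg.apply_zero hn] using hsub.add hg

theorem deriv_eq (hfg : EqModPow n f g) (hn : 1 < n) (hg : DifferentiableAt 𝕜 g 0) :
    deriv f 0 = deriv g 0 := by
  have hsub : HasDerivAt (fun z => f z - g z) 0 0 :=
    (hfg.isBigO_norm_sub_zero_pow.hasFDerivAt (𝕜 := 𝕜) hn).hasDerivAt
  simpa using ((hsub.fun_add hg.hasDerivAt).congr_deriv (zero_add _)).deriv

theorem mul_left {c : 𝕜 → 𝕜} (hc : ContinuousAt c 0) (hfg : EqModPow n f g) :
    EqModPow n (fun z => c z * f z) (fun z => c z * g z) := by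
  have := (hc.isBigO_one 𝕜).mul hfg
  simpa only [EqModPow, mul_sub, one_mul] using this

theorem id_mul (hfg : EqModPow n f g) :
    EqModPow (n + 1) (fun z => z * f z) (fun z => z * g z) := by
  have := (isBigO_refl (fun z : 𝕜 => z) (𝓝 0)).mul hfg
  simpa only [EqModPow, mul_sub, pow_succ'] using this

theorem div_of_mul (hfg : EqModPow n f fun z => h z * g z) (hg : ContinuousAt g 0)
    (hg0 : g 0 ≠ 0) : EqModPow n (fun z => f z / g z) h := by
  have hcancel : (fun z => (g z)⁻¹ * (h z * g z)) =ᶠ[𝓝 0] h := by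
    filter_upwards [hg.eventually_ne hg0] with z hz
    field_simp
  have hmul : EqModPow n (fun z => (g z)⁻¹ * f z) fun z => (g z)⁻¹ * (h z * g z) :=
    hfg.mul_left (hg.inv₀ hg0)
  simpa only [div_eq_inv_mul] using (hmul.symm.congr_left hcancel).symm

theorem comp_right (hfg : EqModPow n f g) (hp : p =O[𝓝 0] fun z => z) :
    EqModPow n (fun z => f (p z)) (fun z => g (p z)) :=
  (IsBigO.comp_tendsto hfg (hp.trans_tendsto tendsto_id)).trans (hp.pow n)

theorem comp_left {φ : 𝕜 → 𝕜} {φ' : 𝕜} (hφ : HasStrictDerivAt φ φ' (g 0)) (hn : n ≠ 0)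
    (hg : ContinuousAt g 0) (hfg : EqModPow n f g) :
    EqModPow n (fun z => φ (f z)) (fun z => φ (g z)) := by
  have hf : Tendsto f (𝓝 0) (𝓝 (g 0)) := hfg.apply_zero hn ▸ hfg.continuousAt hn hg
  exact (hφ.hasStrictFDerivAt.isBigO_sub.comp_tendsto (hf.prodMk_nhds hg)).trans hfg

theorem of_leftInverse {Φ ξ : 𝕜 → 𝕜} {ξ' : 𝕜} (hξ : HasStrictDerivAt ξ ξ' 0)
    (hξΦ : ∀ᶠ z in 𝓝 0, ξ (Φ z) = z) (hn : n ≠ 0) (hp : Tendsto p (𝓝 0) (𝓝 0))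
    (hΦp : EqModPow n (fun x => Φ (p x)) fun x => x) : EqModPow n ξ p :=
  ((hΦp.comp_left hξ hn continuousAt_id).congr_left (hp.eventually hξΦ)).symm

end EqModPow

theorem isBigO_id_of_eq_mul {p r : 𝕜 → 𝕜} (hr : ContinuousAt r 0) (hp : ∀ z, p z = z * r z) :
    p =O[𝓝 0] fun z => z := by
  have : EqModPow 1 p 0 := .of_sub_eq_pow_mul hr fun z => by simp [hp]
  simpa [EqModPow] using this

theorem hasFPowerSeriesAt_tsum_mul_pow [CompleteSpace 𝕜] {c : ℕ → 𝕜} {C : ℝ} {ρ : ℝ≥0}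
    (hρ : 0 < ρ) (hc : ∀ n, ‖c n‖ * ρ ^ n ≤ C) :
    HasFPowerSeriesAt (fun z => ∑' n, c n * z ^ n)
      (FormalMultilinearSeries.ofScalars 𝕜 c) 0 := by
  have hradius : 0 < (FormalMultilinearSeries.ofScalars 𝕜 c).radius :=
    (ENNReal.coe_pos.2 hρ).trans_le <|
      FormalMultilinearSeries.le_radius_of_bound _ C fun n => by simpa using hc n
  convert (FormalMultilinearSeries.hasFPowerSeriesOnBall _ hradius).hasFPowerSeriesAt using 1
  ext z
  simp [FormalMultilinearSeries.sum, mul_comm]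

theorem eqModPow_sum_range_of_hasFPowerSeriesAt {f : 𝕜 → 𝕜} {c : ℕ → 𝕜}
    (hf : HasFPowerSeriesAt f (FormalMultilinearSeries.ofScalars 𝕜 c) 0) (n : ℕ) :
    EqModPow n f fun z => ∑ k ∈ Finset.range n, c k * z ^ k := by
  have hpartial := hf.isBigO_sub_partialSum_pow n
  simp only [← norm_pow, isBigO_norm_right] at hpartial
  simpa [EqModPow, FormalMultilinearSeries.partialSum, mul_comm] using hpartial

end EqModPow

theorem exists_analyticAt_localInverse {𝕜 : Type*} [NontriviallyNormedField 𝕜] [CompleteSpace 𝕜]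
    [CharZero 𝕜] {Φ : 𝕜 → 𝕜} {a : 𝕜} (hΦ : AnalyticAt 𝕜 Φ a) (hΦ' : deriv Φ a ≠ 0) :
    ∃ ξ : 𝕜 → 𝕜, AnalyticAt 𝕜 ξ (Φ a) ∧ (∀ᶠ z in 𝓝 a, ξ (Φ z) = z) ∧
      ∀ᶠ x in 𝓝 (Φ a), Φ (ξ x) = x :=
  ⟨hΦ.hasStrictDerivAt.localInverse _ _ _ hΦ', hΦ.analyticAt_localInverse hΦ',
    HasStrictDerivAt.eventually_left_inverse _ hΦ',
    HasStrictDerivAt.eventually_right_inverse _ hΦ'⟩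

theorem eqModPow_cexp_sum_range {p : ℂ → ℂ} (n : ℕ) (hp : p =O[𝓝 0] fun z => z) :
    EqModPow n (fun z => exp (p z)) fun z => ∑ k ∈ Finset.range n, p z ^ k / k.factorial :=
  EqModPow.comp_right (Complex.exp_sub_sum_range_isBigO_pow n) hp

/-- The Taylor coefficients of `F`. -/
noncomputable def coeffF (n : ℕ) : ℝ := (poch n / n.factorial) ^ 2

/-- The Taylor coefficients of `F₁`. -/
noncomputable def coeffF₁ (n : ℕ) : ℝ :=
  coeffF n * (4 * (∑ k ∈ Finset.Icc 1 n, 1 / (2 * (k : ℝ) - 1))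
    - 2 * (∑ k ∈ Finset.Icc 1 n, 1 / (k : ℝ)) - 4 * Real.log 2)

theorem poch_succ (n : ℕ) : poch (n + 1) = poch n * (1 / 2 + n) :=
  Finset.prod_range_succ _ n

theorem poch_nonneg (n : ℕ) : 0 ≤ poch n :=
  Finset.prod_nonneg fun j _ => by positivity

theorem poch_le_factorial (n : ℕ) : poch n ≤ n.factorial := by
  induction n with
  | zero => simp [poch]
  | succ n ih =>
    rw [poch_succ, Nat.factorial_succ, mul_comm]
    push_cast
    exact mul_le_mul (by linarith) ih (poch_nonneg n) (by positivity)

theorem coeffF_nonneg (n : ℕ) : 0 ≤ coeffF n :=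
  sq_nonneg _

theorem coeffF_le_one (n : ℕ) : coeffF n ≤ 1 :=
  pow_le_one₀ (div_nonneg (poch_nonneg n) (by positivity))
    (div_le_one_of_le₀ (poch_le_factorial n) (by positivity))

theorem sum_Icc_one_div_mem_Icc {u : ℕ → ℝ} (hu : ∀ k, 1 ≤ k → 1 ≤ u k) (n : ℕ) :
    ∑ k ∈ Finset.Icc 1 n, 1 / u k ∈ Set.Icc (0 : ℝ) n := by
  have hterm : ∀ k ∈ Finset.Icc 1 n, 1 ≤ u k := fun k hk => hu k (Finset.mem_Icc.1 hk).1
  constructor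
  · exact Finset.sum_nonneg fun k hk => by have := hterm k hk; positivity
  · have hle : ∀ k ∈ Finset.Icc 1 n, 1 / u k ≤ 1 := fun k hk => by
      simpa using inv_le_one_of_one_le₀ (hterm k hk)
    simpa using Finset.sum_le_card_nsmul _ _ 1 hle

theorem abs_coeffF₁_le (n : ℕ) : |coeffF₁ n| ≤ 4 * (n + 1) := by
  obtain ⟨hodd_nonneg, hodd_le⟩ := sum_Icc_one_div_mem_Icc (u := fun k => 2 * (k : ℝ) - 1)
    (fun k hk => by have : (1 : ℝ) ≤ k := mod_cast hk; linarith) n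
  obtain ⟨hharm_nonneg, hharm_le⟩ := sum_Icc_one_div_mem_Icc (u := fun k => (k : ℝ))
    (fun k hk => mod_cast hk) n
  have hlog_nonneg : 0 ≤ Real.log 2 := Real.log_nonneg one_le_two
  have hlog_le : Real.log 2 ≤ 1 := by linarith [Real.log_two_lt_d9]
  rw [coeffF₁, abs_mul, abs_of_nonneg (coeffF_nonneg n)]
  refine (mul_le_of_le_one_left (abs_nonneg _) (coeffF_le_one n)).trans (abs_le.2 ?_)
  constructor <;> linarith

theorem hasFPowerSeriesAt_F :
    HasFPowerSeriesAt F (FormalMultilinearSeries.ofScalars ℂ fun n => (coeffF n : ℂ)) 0 :=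
  hasFPowerSeriesAt_tsum_mul_pow (c := fun n => (coeffF n : ℂ)) (C := 1) one_pos fun n => by
    rw [norm_real, Real.norm_of_nonneg (coeffF_nonneg n), NNReal.coe_one, one_pow, mul_one]
    exact coeffF_le_one n

theorem hasFPowerSeriesAt_F₁ :
    HasFPowerSeriesAt F₁ (FormalMultilinearSeries.ofScalars ℂ fun n => (coeffF₁ n : ℂ)) 0 :=
  hasFPowerSeriesAt_tsum_mul_pow (c := fun n => (coeffF₁ n : ℂ)) (ρ := 1 / 2)
    (by norm_num) fun n => by
    have hn : (n : ℝ) + 1 ≤ 2 ^ n := mod_cast Nat.lt_two_pow_self (n := n)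
    calc ‖(coeffF₁ n : ℂ)‖ * ((1 / 2 : ℝ≥0) : ℝ) ^ n = |coeffF₁ n| / 2 ^ n := by
          simp [div_eq_mul_inv]
      _ ≤ 4 := by
          rw [div_le_iff₀ (by positivity)]
          linarith [abs_coeffF₁_le n]

theorem coeffF_zero : coeffF 0 = 1 := by
  simp [coeffF, poch]

theorem coeffF_succ (n : ℕ) : coeffF (n + 1) = coeffF n * ((1 / 2 + n) / (n + 1)) ^ 2 := by
  rw [coeffF, coeffF, poch_succ, Nat.factorial_succ]
  push_cast
  field_simp

theorem coeffF_one : coeffF 1 = 1 / 4 := by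
  norm_num [coeffF_succ 0, coeffF_zero]

theorem coeffF_two : coeffF 2 = 9 / 64 := by
  norm_num [coeffF_succ 1, coeffF_one]

theorem coeffF_three : coeffF 3 = 25 / 256 := by
  norm_num [coeffF_succ 2, coeffF_two]

theorem coeffF₁_zero : coeffF₁ 0 = -4 * Real.log 2 := by
  norm_num [coeffF₁, coeffF_zero]

theorem coeffF₁_one : coeffF₁ 1 = 1 / 4 * (2 - 4 * Real.log 2) := by
  norm_num [coeffF₁, coeffF_one]

theorem coeffF₁_two : coeffF₁ 2 = 9 / 64 * (7 / 3 - 4 * Real.log 2) := by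
  norm_num [coeffF₁, coeffF_two, Finset.sum_Icc_succ_top]

theorem coeffF₁_three : coeffF₁ 3 = 25 / 256 * (37 / 15 - 4 * Real.log 2) := by
  norm_num [coeffF₁, coeffF_three, Finset.sum_Icc_succ_top]

theorem F_eqModPow :
    EqModPow 4 F fun z => 1 + z / 4 + 9 / 64 * z ^ 2 + 25 / 256 * z ^ 3 := by
  convert eqModPow_sum_range_of_hasFPowerSeriesAt hasFPowerSeriesAt_F 4 using 2 with z
  simp only [Finset.sum_range_succ, Finset.sum_range_zero, coeffF_zero, coeffF_one, coeffF_two,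
    coeffF_three]
  push_cast
  ring

theorem F₁_eqModPow :
    EqModPow 4 F₁ fun z => -4 * (Real.log 2 : ℂ) + 1 / 4 * (2 - 4 * (Real.log 2 : ℂ)) * z
      + 9 / 64 * (7 / 3 - 4 * (Real.log 2 : ℂ)) * z ^ 2
      + 25 / 256 * (37 / 15 - 4 * (Real.log 2 : ℂ)) * z ^ 3 := by
  convert eqModPow_sum_range_of_hasFPowerSeriesAt hasFPowerSeriesAt_F₁ 4 using 2 with z
  simp only [Finset.sum_range_succ, Finset.sum_range_zero, coeffF₁_zero, coeffF₁_one, coeffF₁_two,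
    coeffF₁_three]
  push_cast
  ring

theorem F_zero : F 0 = 1 := by
  simpa using F_eqModPow.apply_zero four_ne_zero

theorem F₁_div_F_eqModPow :
    EqModPow 4 (fun z => F₁ z / F z) fun z =>
      z / 2 + 13 / 64 * z ^ 2 + 23 / 192 * z ^ 3 - 4 * (Real.log 2 : ℂ) := by
  let q : ℂ → ℂ := fun z =>
    z / 2 + 13 / 64 * z ^ 2 + 23 / 192 * z ^ 3 - 4 * (Real.log 2 : ℂ)
  let P : ℂ → ℂ := fun z => 1 + z / 4 + 9 / 64 * z ^ 2 + 25 / 256 * z ^ 3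
  have hF₁_qP : EqModPow 4 F₁ fun z => q z * P z := F₁_eqModPow.trans <|
    .of_sub_eq_pow_mul (r := fun z => -(1 / 2 * 25 / 256 + 13 / 64 * 9 / 64 + 23 / 192 / 4)
      - (13 / 64 * 25 / 256 + 23 / 192 * 9 / 64) * z - 23 / 192 * 25 / 256 * z ^ 2)
      (by fun_prop) fun z => by ring
  have hqF_qP : EqModPow 4 (fun z => q z * F z) fun z => q z * P z :=
    F_eqModPow.mul_left (by fun_prop)
  exact (hF₁_qP.trans hqF_qP.symm).div_of_mul hasFPowerSeriesAt_F.continuousAt (by simp [F_zero])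

theorem cexp_four_mul_log_two : exp (4 * (Real.log 2 : ℂ)) = 16 := by
  have hlog : exp (Real.log 2 : ℂ) = 2 := by
    rw [← ofReal_exp, Real.exp_log two_pos, ofReal_ofNat]
  calc exp (4 * (Real.log 2 : ℂ)) = exp (Real.log 2 : ℂ) ^ 4 := by
        rw [← exp_nat_mul, Nat.cast_ofNat]
    _ = 16 := by rw [hlog]; norm_num

theorem cexp_cubic_eqModPow :
    EqModPow 4 (fun z => exp (z / 2 + 13 / 64 * z ^ 2 + 23 / 192 * z ^ 3)) fun z =>
      1 + z / 2 + 21 / 64 * z ^ 2 + 31 / 128 * z ^ 3 := by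
  have hcubic : (fun z : ℂ => z / 2 + 13 / 64 * z ^ 2 + 23 / 192 * z ^ 3) =O[𝓝 0] fun z => z :=
    isBigO_id_of_eq_mul (r := fun z => 1 / 2 + 13 / 64 * z + 23 / 192 * z ^ 2) (by fun_prop)
      fun z => by ring
  refine (eqModPow_cexp_sum_range 4 hcubic).trans ?_
  let w : ℂ → ℂ := fun z => 13 / 64 + 23 / 192 * z
  -- the exponent is `z * (1 / 2 + z * w z)`
  refine .of_sub_eq_pow_mul (r := fun z =>
    23 / 384 + w z ^ 2 / 2 + w z / 8 + z * w z ^ 2 / 4 + z ^ 2 * w z ^ 3 / 6)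
    (by fun_prop) fun z => ?_
  simp only [Finset.sum_range_succ, Finset.sum_range_zero, Nat.factorial, w]
  push_cast
  ring

/-- The function whose local inverse at `0` is `ξ`: sixteen times the elliptic nome of
parameter `z`. -/
noncomputable def scaledNome (z : ℂ) : ℂ := z * (16 * exp (F₁ z / F z))

theorem scaledNome_zero : scaledNome 0 = 0 := by
  simp [scaledNome]

theorem analyticAt_scaledNome : AnalyticAt ℂ scaledNome 0 :=
  analyticAt_id.mul <| analyticAt_const.mul <|
    (hasFPowerSeriesAt_F₁.analyticAt.div hasFPowerSeriesAt_F.analyticAt (by simp [F_zero])).cexp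

theorem eq_of_scaledNome_eq {z x : ℂ} (hzx : scaledNome z = x) :
    z = x / 16 * exp (-(F₁ z) / F z) := by
  rw [← hzx, scaledNome, neg_div, exp_neg]
  field_simp [exp_ne_zero]

theorem scaledNome_eqModPow :
    EqModPow 5 scaledNome fun z => z + z ^ 2 / 2 + 21 / 64 * z ^ 3 + 31 / 128 * z ^ 4 := by
  have hexp : EqModPow 4 (fun z => 16 * exp (F₁ z / F z))
      fun z => exp (z / 2 + 13 / 64 * z ^ 2 + 23 / 192 * z ^ 3) := by
    convert (F₁_div_F_eqModPow.comp_left (hasStrictDerivAt_exp _) four_ne_zero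
      (by fun_prop)).mul_left (continuousAt_const (y := 16)) using 2 with z
    rw [exp_sub, cexp_four_mul_log_two, mul_div_cancel₀ _ (by norm_num)]
  convert (hexp.trans cexp_cubic_eqModPow).id_mul using 2 with z
  · rfl
  · ring

theorem deriv_scaledNome_zero : deriv scaledNome 0 = 1 := by
  have hid : EqModPow 2 scaledNome fun z => z :=
    (scaledNome_eqModPow.mono (by norm_num)).trans <|
      .of_sub_eq_pow_mul (r := fun z => 1 / 2 + 21 / 64 * z + 31 / 128 * z ^ 2) (by fun_prop)
        fun z => by ring
  exact (hid.deriv_eq one_lt_two differentiableAt_id).trans (deriv_id 0)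

theorem scaledNome_quartic_eqModPow :
    EqModPow 5 (fun x => scaledNome (x - x ^ 2 / 2 + 11 * x ^ 3 / 64 - 3 * x ^ 4 / 64))
      fun x => x := by
  have hquartic : (fun x : ℂ => x - x ^ 2 / 2 + 11 * x ^ 3 / 64 - 3 * x ^ 4 / 64)
      =O[𝓝 0] fun x => x :=
    isBigO_id_of_eq_mul (r := fun x => 1 - x / 2 + 11 * x ^ 2 / 64 - 3 * x ^ 3 / 64)
      (by fun_prop) fun x => by ring
  refine (scaledNome_eqModPow.comp_right hquartic).trans ?_
  let w : ℂ → ℂ := fun x => 11 / 64 - 3 / 64 * x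
  let v : ℂ → ℂ := fun x => -1 / 2 + x * w x
  -- the quartic is `x + x ^ 2 * v x`
  refine .of_sub_eq_pow_mul (r := fun x =>
    -3 / 64 + (v x - 1 / 2) * w x / 2 + 63 / 64 * w x + 21 / 64 * (3 * v x ^ 2 + x * v x ^ 3)
      + 31 / 128 * (4 * v x + 6 * x * v x ^ 2 + 4 * x ^ 2 * v x ^ 3 + x ^ 3 * v x ^ 4))
    (by fun_prop) fun x => ?_
  simp only [v, w]
  ring

/-- there exist `ρ > 0` and a function `ξ`, analytic on `|x| < ρ` with
`ξ(0) = 0`, satisfying the fixed point equation `ξ(x) = (x/16)·exp(−F₁(ξ(x))/F(ξ(x)))`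
for `|x| < ρ`, whose Taylor expansion at `0` begins
`ξ(x) = x − x²/2 + 11x³/64 − 3x⁴/64 + O(x⁵)`. -/
theorem stmt_18 :
    ∃ ρ > (0:ℝ), ∃ ξ : ℂ → ℂ,
      AnalyticOn ℂ ξ (Metric.ball 0 ρ) ∧ ξ 0 = 0 ∧
      (∀ x ∈ Metric.ball (0:ℂ) ρ,
        ξ x = x/16 * Complex.exp (-(F₁ (ξ x)) / F (ξ x))) ∧
      (fun x : ℂ => ξ x - (x - x^2/2 + 11*x^3/64 - 3*x^4/64)) =O[nhds 0]
        (fun x : ℂ => x^5) := by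
  obtain ⟨ξ, hξ, hleft, hright⟩ := exists_analyticAt_localInverse analyticAt_scaledNome
    (by rw [deriv_scaledNome_zero]; exact one_ne_zero)
  rw [scaledNome_zero] at hξ hright
  obtain ⟨ρ, hρ, hball⟩ := Metric.eventually_nhds_iff_ball.1 (hξ.eventually_analyticAt.and hright)
  have hξ0 : ξ 0 = 0 := by simpa [scaledNome_zero] using hleft.self_of_nhds
  have hquartic : Tendsto (fun x : ℂ => x - x ^ 2 / 2 + 11 * x ^ 3 / 64 - 3 * x ^ 4 / 64)
      (𝓝 0) (𝓝 0) := Continuous.tendsto' (by fun_prop) _ _ (by simp)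
  exact ⟨ρ, hρ, ξ, fun x hx => (hball x hx).1.analyticWithinAt, hξ0,
    fun x hx => eq_of_scaledNome_eq (hball x hx).2,
    EqModPow.of_leftInverse hξ.hasStrictDerivAt hleft (by norm_num) hquartic
      scaledNome_quartic_eqModPow⟩
end
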